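/- arXiv:2301.02155 — 2 statements merged into one kernel-verified Lean document; each statement's English description precedes it below -/
import Mathlib

section
/- Every pair (ᾱ, β̄) that is achievable by linear (2,2) PIR codes satisfies ᾱ + 6β̄ ≥ 6. -/
open scoped BigOperators

namespace PIR

/-- Messages are length-`L` vectors over `F_2`. -/
abbrev Msg (L : ℕ) := Fin L → ZMod 2

/-- A (2,2) PIR code (without the correctness condition) with message length `L`
and query alphabet `Q`.  The two messages are independent and uniform on `F_2^L`;
the queries are independent of the messages (built into the model: the query
distribution `P k` for desired message `k` does not depend on the messages). -/
structure CodeBase (L : ℕ) (Q : Type) [Fintype Q] [DecidableEq Q] where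
  /-- query distribution for desired message index `k` -/
  P : Fin 2 → Q × Q → ℝ
  P_nonneg : ∀ k qq, 0 ≤ P k qq
  P_sum : ∀ k, ∑ qq : Q × Q, P k qq = 1
  /-- number of stored `F_2` symbols at database `n` -/
  stor : Fin 2 → ℕ
  /-- storage encoders -/
  phi : (n : Fin 2) → Msg L × Msg L → (Fin (stor n) → ZMod 2)
  /-- answer lengths -/
  blen : Fin 2 → Q → ℕ
  /-- deterministic answer functions -/
  ans : (n : Fin 2) → (q : Q) → (Fin (stor n) → ZMod 2) → (Fin (blen n q) → ZMod 2)
  /-- decoding functions -/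
  dec : (k : Fin 2) → (q₁ q₂ : Q) → (Fin (blen 0 q₁) → ZMod 2) →
      (Fin (blen 1 q₂) → ZMod 2) → Msg L
  /-- Privacy: for each database `n`, the joint distribution of
  `(Q_n^{[k]}, A_n^{[k]}, S_n)` is the same for `k = 1, 2`.  Since the answer
  `A_n` is the fixed deterministic function `ans` of `(Q_n, S_n)` (not
  depending on `k`), this is expressed as equality of the joint distributions of
  `(Q_n, S_n)` (messages uniform, queries independent of messages). -/
  privacy : ∀ (n : Fin 2) (q : Q) (s : Fin (stor n) → ZMod 2),
    (∑ qq : Q × Q, if (if n = 0 then qq.1 else qq.2) = q then P 0 qq else 0) *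
      ((Finset.univ.filter (fun w : Msg L × Msg L => phi n w = s)).card : ℝ) =
    (∑ qq : Q × Q, if (if n = 0 then qq.1 else qq.2) = q then P 1 qq else 0) *
      ((Finset.univ.filter (fun w : Msg L × Msg L => phi n w = s)).card : ℝ)

variable {L : ℕ} {Q : Type} [Fintype Q] [DecidableEq Q]

/-- The desired message `W_k`. -/
def target (k : Fin 2) (w : Msg L × Msg L) : Msg L := if k = 0 then w.1 else w.2

/-- The decoder output `Ŵ_k` when the realized queries are `qq` and the messages `w`. -/
def retrieved (C : CodeBase L Q) (k : Fin 2) (qq : Q × Q) (w : Msg L × Msg L) : Msg L :=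
  C.dec k qq.1 qq.2 (C.ans 0 qq.1 (C.phi 0 w)) (C.ans 1 qq.2 (C.phi 1 w))

/-- Zero-error correctness: `Ŵ_k = W_k` for all realizations. -/
def IsZeroError (C : CodeBase L Q) : Prop :=
  ∀ (k : Fin 2) (w : Msg L × Msg L) (qq : Q × Q), C.P k qq ≠ 0 →
    retrieved C k qq w = target k w

/-- The average probability of error `P_e`. -/
noncomputable def Pe (C : CodeBase L Q) : ℝ :=
  (1/2) * ∑ k : Fin 2, ∑ w : Msg L × Msg L, ∑ qq : Q × Q,
    ((2:ℝ)^(2*L))⁻¹ * C.P k qq * (if retrieved C k qq w ≠ target k w then 1 else 0)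

/-- The retrieval rate `β_n = E[β_n^{(Q_n)}]` (the marginal of `Q_n` is the same
for `k=1,2` by privacy; we use `k=1`, i.e. index `0`). -/
noncomputable def betaRate (C : CodeBase L Q) (n : Fin 2) : ℝ :=
  ∑ qq : Q × Q, C.P 0 qq * (C.blen n (if n = 0 then qq.1 else qq.2) : ℝ)

/-- A linear PIR code: storage encoders and answer functions are `F_2`-linear. -/
def IsLinear (C : CodeBase L Q) : Prop :=
  (∀ n : Fin 2, IsLinearMap (ZMod 2) (C.phi n)) ∧
  (∀ (n : Fin 2) (q : Q), IsLinearMap (ZMod 2) (C.ans n q))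

/-- A bundled PIR code (with its query alphabet). -/
structure Code (L : ℕ) where
  Q : Type
  [fQ : Fintype Q]
  [dQ : DecidableEq Q]
  base : CodeBase L Q

attribute [instance] Code.fQ Code.dQ

/-- A normalized storage-retrieval pair `(ᾱ, β̄)` is achievable. -/
def Achievable (ab : ℝ × ℝ) : Prop :=
  ∀ ε > (0:ℝ), ∃ L₀ : ℕ, ∀ L ≥ L₀, ∃ C : Code L,
    IsZeroError C.base ∧
    ((C.base.stor 0 + C.base.stor 1 : ℕ) : ℝ) / 2 ≤ L * (ab.1 + ε) ∧
    (betaRate C.base 0 + betaRate C.base 1) / 2 ≤ L * (ab.2 + ε)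

/-- Achievability by linear codes. -/
def LinAchievable (ab : ℝ × ℝ) : Prop :=
  ∀ ε > (0:ℝ), ∃ L₀ : ℕ, ∀ L ≥ L₀, ∃ C : Code L,
    IsZeroError C.base ∧ IsLinear C.base ∧
    ((C.base.stor 0 + C.base.stor 1 : ℕ) : ℝ) / 2 ≤ L * (ab.1 + ε) ∧
    (betaRate C.base 0 + betaRate C.base 1) / 2 ≤ L * (ab.2 + ε)

/-- The achievable storage-retrieval rate region `R`. -/
def Region : Set (ℝ × ℝ) := { ab | Achievable ab }

/-- The query distribution used for the `(2,2)` PIR system: for message 1,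
uniform on `{(1,1),(2,2)}`; for message 2, uniform on `{(1,2),(2,1)}`. -/
noncomputable def stdP : Fin 2 → Fin 2 × Fin 2 → ℝ :=
  fun k qq => if (k = 0 ∧ qq.1 = qq.2) ∨ (k = 1 ∧ qq.1 ≠ qq.2) then 1/2 else 0


section LinAlg
open Module
variable {F V : Type*} [Field F] [AddCommGroup V] [Module F V] [FiniteDimensional F V]

theorem finrank_add_le_of_disj {A B N : Submodule F V} (hA : A ≤ N) (hB : B ≤ N)
    (h : A ⊓ B ≤ ⊥) : finrank F A + finrank F B ≤ finrank F N := by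
  have h1 := Submodule.finrank_sup_add_finrank_inf_eq A B
  rw [le_bot_iff.mp h, finrank_bot] at h1
  have h2 := Submodule.finrank_mono (sup_le hA hB)
  omega

theorem inf_lower (A B : Submodule F V) :
    finrank F A + finrank F B ≤ finrank F V + finrank F (A ⊓ B : Submodule F V) := by
  have h1 := Submodule.finrank_sup_add_finrank_inf_eq A B
  have h2 := Submodule.finrank_le (A ⊔ B)
  omega

/-- The subspace inequality behind the bound (all spaces are kernels). -/
theorem triple (X X' Y N₁ N₂ : Submodule F V) (hN : N₁ ⊓ N₂ ≤ ⊥)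
    (h1 : X ⊓ Y ≤ N₁) (h2 : X' ⊓ Y ≤ N₂) :
    finrank F (X ⊓ X' : Submodule F V) + finrank F (X ⊓ N₂ : Submodule F V)
      + finrank F (X' ⊓ N₁ : Submodule F V) + 2 * finrank F Y ≤ 2 * finrank F V := by
  have hXXY : X ⊓ Y ⊓ X' ≤ ⊥ := by
    refine le_trans (le_inf ?_ ?_) hN
    · exact inf_le_left.trans h1
    · exact le_trans (le_inf inf_le_right (inf_le_left.trans inf_le_right)) h2
  have e1 := finrank_add_le_of_disj (A := X ⊓ Y) (B := X' ⊓ N₁) (N := (X ⊔ X') ⊓ N₁)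
    (le_inf (inf_le_left.trans le_sup_left) h1)
    (le_inf (inf_le_left.trans le_sup_right) inf_le_right)
    (le_trans (inf_le_inf_left _ inf_le_left) hXXY)
  have e2 := finrank_add_le_of_disj (A := X' ⊓ Y) (B := X ⊓ N₂) (N := (X ⊔ X') ⊓ N₂)
    (le_inf (inf_le_left.trans le_sup_right) h2)
    (le_inf (inf_le_left.trans le_sup_left) inf_le_right)
    (le_trans (le_inf (le_inf (inf_le_right.trans inf_le_left)
      (inf_le_left.trans inf_le_right)) (inf_le_left.trans inf_le_left)) hXXY)
  have e3 := finrank_add_le_of_disj (A := (X ⊔ X') ⊓ N₁) (B := (X ⊔ X') ⊓ N₂) (N := X ⊔ X')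
    inf_le_left inf_le_left
    (le_trans (inf_le_inf inf_le_right inf_le_right) hN)
  have e4 := Submodule.finrank_sup_add_finrank_inf_eq X X'
  have e5 := inf_lower X Y
  have e6 := inf_lower X' Y
  omega

theorem ker_lower {m : ℕ} (f : V →ₗ[F] (Fin m → F)) :
    finrank F V ≤ m + finrank F (LinearMap.ker f) := by
  have h1 := f.finrank_range_add_finrank_ker
  have h2 := Submodule.finrank_le (LinearMap.range f)
  rw [finrank_fin_fun] at h2
  omega

end LinAlg

section Avg
variable {R : Type*} [Fintype R]

theorem avg_pair (u v f g : R → ℝ) (c : ℝ) (hu : ∀ x, 0 ≤ u x) (hv : ∀ x, 0 ≤ v x)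
    (huv : ∑ x, u x = ∑ x, v x)
    (h : ∀ x x', u x ≠ 0 → v x' ≠ 0 → f x + g x' ≤ c) :
    ∑ x, u x * f x + ∑ x, v x * g x ≤ (∑ x, u x) * c := by
  set p := ∑ x, u x with hp
  have hp0 : 0 ≤ p := Finset.sum_nonneg fun x _ => hu x
  rcases hp0.eq_or_lt with h0 | h0
  · have hu0 : ∀ x, u x = 0 := fun x =>
      (Finset.sum_eq_zero_iff_of_nonneg (fun x _ => hu x)).mp (h0.symm ▸ hp.symm) x (Finset.mem_univ x)
    have hv0 : ∀ x, v x = 0 := fun x =>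
      (Finset.sum_eq_zero_iff_of_nonneg (fun x _ => hv x)).mp (by rw [← huv, ← h0]) x
        (Finset.mem_univ x)
    simp [hu0, hv0, ← h0]
  · have key : ∑ x, ∑ x', u x * v x' * (f x + g x') ≤ ∑ x, ∑ x', u x * v x' * c := by
      refine Finset.sum_le_sum fun x _ => Finset.sum_le_sum fun x' _ => ?_
      by_cases h1 : u x = 0
      · simp [h1]
      by_cases h2 : v x' = 0
      · simp [h2]
      exact mul_le_mul_of_nonneg_left (h x x' h1 h2) (mul_nonneg (hu x) (hv x'))
    have l1 : ∑ x, ∑ x', u x * v x' * (f x + g x')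
        = (∑ x, u x * f x) * (∑ x, v x) + (∑ x, u x) * (∑ x, v x * g x) := by
      rw [Finset.sum_mul_sum, Finset.sum_mul_sum, ← Finset.sum_add_distrib]
      refine Finset.sum_congr rfl fun x _ => ?_
      rw [← Finset.sum_add_distrib]
      exact Finset.sum_congr rfl fun x' _ => by ring
    have l2 : ∑ x, ∑ x', u x * v x' * c = (∑ x, u x) * (∑ x, v x) * c := by
      rw [Finset.sum_mul_sum, Finset.sum_mul]
      exact Finset.sum_congr rfl fun x _ => by rw [Finset.sum_mul]
    rw [l1, l2, ← huv, ← hp] at key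
    have : p * (∑ x, u x * f x + ∑ x, v x * g x) ≤ p * (p * c) := by linarith
    exact le_of_mul_le_mul_left this h0

theorem avg_le (P f g : R → R → ℝ) (hP : ∀ x y, 0 ≤ P x y)
    (h : ∀ x y, P x y ≠ 0 → f x y ≤ g x y) :
    ∑ x, ∑ y, P x y * f x y ≤ ∑ x, ∑ y, P x y * g x y := by
  refine Finset.sum_le_sum fun x _ => Finset.sum_le_sum fun y _ => ?_
  by_cases h1 : P x y = 0
  · simp [h1]
  · exact mul_le_mul_of_nonneg_left (h x y h1) (hP x y)

theorem avg_main (P₀ P₁ : R → R → ℝ) (h₀ : ∀ x y, 0 ≤ P₀ x y) (h₁ : ∀ x y, 0 ≤ P₁ x y)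
    (hs : ∑ x, ∑ y, P₀ x y = 1)
    (m1 : ∀ x, ∑ y, P₀ x y = ∑ y, P₁ x y) (m2 : ∀ y, ∑ x, P₀ x y = ∑ x, P₁ x y)
    (b₁ b₂ u₁ u₂ : R → ℝ) (a l : ℝ)
    (h3 : ∀ x x' y, P₀ x y ≠ 0 → P₁ x' y ≠ 0 → 2 * l + u₂ x + u₁ x' ≤ a + 2 * b₂ y)
    (hu1 : ∀ x y, P₀ x y ≠ 0 → 2 * l - b₁ x - b₂ y ≤ u₁ x)
    (hu2 : ∀ x y, P₁ x y ≠ 0 → 2 * l - b₁ x - b₂ y ≤ u₂ x) :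
    6 * l ≤ a + 2 * (∑ x, ∑ y, P₀ x y * b₁ x) + 4 * (∑ x, ∑ y, P₀ x y * b₂ y) := by
  have t1 : ∀ f : R → ℝ, ∑ x, ∑ y, P₁ x y * f x = ∑ x, ∑ y, P₀ x y * f x := by
    intro f
    simp only [← Finset.sum_mul, m1]
  have t2 : ∀ f : R → ℝ, ∑ x, ∑ y, P₁ x y * f y = ∑ x, ∑ y, P₀ x y * f y := by
    intro f
    rw [Finset.sum_comm, Finset.sum_comm (f := fun x y => P₀ x y * f y)]
    simp only [← Finset.sum_mul, m2]
  have hs1 : ∑ x, ∑ y, P₁ x y = 1 := by simp only [← m1, hs]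
  have ex : ∀ P : R → R → ℝ, ∑ x, ∑ y, P x y = 1 →
      ∑ x, ∑ y, P x y * (2 * l - b₁ x - b₂ y)
        = 2 * l - ∑ x, ∑ y, P x y * b₁ x - ∑ x, ∑ y, P x y * b₂ y := by
    intro P hP
    simp only [mul_sub, Finset.sum_sub_distrib, ← Finset.sum_mul, hP, one_mul]
  have i1 := avg_le P₀ (fun x y => 2 * l - b₁ x - b₂ y) (fun x _ => u₁ x) h₀ hu1
  have i2 := avg_le P₁ (fun x y => 2 * l - b₁ x - b₂ y) (fun x _ => u₂ x) h₁ hu2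
  simp only [ex P₀ hs] at i1
  simp only [ex P₁ hs1, t1, t2] at i2
  have i3 : ∑ y, (∑ x, P₀ x y * u₂ x + ∑ x, P₁ x y * u₁ x)
      ≤ ∑ y, (∑ x, P₀ x y) * (a + 2 * b₂ y - 2 * l) := by
    refine Finset.sum_le_sum fun y _ => ?_
    refine avg_pair _ _ _ _ _ (fun x => h₀ x y) (fun x => h₁ x y) (m2 y) ?_
    intro x x' hx hx'
    linarith [h3 x x' y hx hx']
  rw [Finset.sum_add_distrib, Finset.sum_comm, Finset.sum_comm (f := fun y x => P₁ x y * u₁ x),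
    t1] at i3
  have e4 : ∑ y, (∑ x, P₀ x y) * (a + 2 * b₂ y - 2 * l)
      = a - 2 * l + 2 * ∑ x, ∑ y, P₀ x y * b₂ y := by
    have : ∀ y, (∑ x, P₀ x y) * (a + 2 * b₂ y - 2 * l)
        = (∑ x, P₀ x y) * (a - 2 * l) + 2 * ∑ x, P₀ x y * b₂ y := by
      intro y
      rw [← Finset.sum_mul]
      ring
    simp only [this, Finset.sum_add_distrib, ← Finset.sum_mul, ← Finset.mul_sum]
    rw [Finset.sum_comm, hs, one_mul]
    simp only [Finset.sum_mul]
    rw [Finset.sum_comm]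
  rw [e4] at i3
  linarith

end Avg

section Main
open Module

theorem marg_eq (C : CodeBase L Q) (n : Fin 2) (q : Q) :
    (∑ qq : Q × Q, if (if n = 0 then qq.1 else qq.2) = q then C.P 0 qq else 0) =
    (∑ qq : Q × Q, if (if n = 0 then qq.1 else qq.2) = q then C.P 1 qq else 0) := by
  have h := C.privacy n q (C.phi n 0)
  refine mul_right_cancel₀ ?_ h
  have : 0 < (Finset.univ.filter (fun w : Msg L × Msg L => C.phi n w = C.phi n 0)).card :=
    Finset.card_pos.mpr ⟨0, by simp⟩
  exact_mod_cast this.ne'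

theorem marg1 (C : CodeBase L Q) (q : Q) : ∑ y, C.P 0 (q, y) = ∑ y, C.P 1 (q, y) := by
  have h := marg_eq C 0 q
  simp only [if_true, Fintype.sum_prod_type] at h
  rw [Finset.sum_comm, Finset.sum_comm (f := fun x y => if x = q then C.P 1 (x, y) else 0)] at h
  simpa using h

theorem marg2 (C : CodeBase L Q) (q : Q) : ∑ x, C.P 0 (x, q) = ∑ x, C.P 1 (x, q) := by
  have h := marg_eq C 1 q
  simpa [Fintype.sum_prod_type] using h

theorem code_bound (C : CodeBase L Q) (hz : IsZeroError C) (hl : IsLinear C) :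
    12 * (L : ℝ) ≤ ((C.stor 0 + C.stor 1 : ℕ) : ℝ) + 6 * (betaRate C 0 + betaRate C 1) := by
  obtain ⟨hphi, hans⟩ := hl
  let φ : (n : Fin 2) → (Msg L × Msg L) →ₗ[ZMod 2] (Fin (C.stor n) → ZMod 2) :=
    fun n => (hphi n).mk' _
  let ψ : (n : Fin 2) → (q : Q) → (Msg L × Msg L) →ₗ[ZMod 2] (Fin (C.blen n q) → ZMod 2) :=
    fun n q => ((hans n q).mk' _).comp (φ n)
  let N : Fin 2 → Submodule (ZMod 2) (Msg L × Msg L) := fun k =>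
    if k = 0 then LinearMap.ker (LinearMap.fst (ZMod 2) (Msg L) (Msg L))
      else LinearMap.ker (LinearMap.snd (ZMod 2) (Msg L) (Msg L))
  let X : (n : Fin 2) → Q → Submodule (ZMod 2) (Msg L × Msg L) := fun n q =>
    LinearMap.ker (ψ n q)
  have hdim : finrank (ZMod 2) (Msg L × Msg L) = 2 * L := by
    rw [finrank_prod, finrank_fin_fun]; ring
  have hN : N 0 ⊓ N 1 ≤ ⊥ := by
    rintro ⟨w1, w2⟩ hw
    simp only [N, Submodule.mem_inf] at hw
    simpa using hw
  have hX : ∀ n q, 2 * L ≤ C.blen n q + finrank (ZMod 2) (X n q) := by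
    intro n q
    rw [← hdim]
    exact ker_lower (ψ n q)
  have hS : ∀ n, ∀ q q', 2 * L ≤ C.stor n +
      finrank (ZMod 2) (X n q ⊓ X n q' : Submodule (ZMod 2) (Msg L × Msg L)) := by
    intro n q q'
    rw [← hdim]
    refine (ker_lower (φ n)).trans (Nat.add_le_add_left (Submodule.finrank_mono ?_) _)
    refine le_inf ?_ ?_
    · exact LinearMap.ker_le_ker_comp _ _
    · exact LinearMap.ker_le_ker_comp _ _
  have hdec : ∀ k x y, C.P k (x, y) ≠ 0 → X 0 x ⊓ X 1 y ≤ N k := by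
    intro k x y hP w hw
    have hw0 : C.ans 0 x (C.phi 0 w) = 0 := hw.1
    have hw1 : C.ans 1 y (C.phi 1 w) = 0 := hw.2
    have z0 : C.ans 0 x (C.phi 0 0) = 0 := (ψ 0 x).map_zero
    have z1 : C.ans 1 y (C.phi 1 0) = 0 := (ψ 1 y).map_zero
    have e1 := hz k w (x, y) hP
    have e2 := hz k 0 (x, y) hP
    simp only [retrieved, hw0, hw1, z0, z1] at e1 e2
    have e3 : target k w = target k 0 := e1.symm.trans e2
    fin_cases k
    · simpa [target, N] using e3
    · simpa [target, N] using e3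
  let u : Fin 2 → Fin 2 → Q → ℕ := fun n k q =>
    finrank (ZMod 2) (X n q ⊓ N k : Submodule (ZMod 2) (Msg L × Msg L))
  have hu : ∀ k x y, C.P k (x, y) ≠ 0 →
      2 * L ≤ u 0 k x + C.blen 0 x + C.blen 1 y ∧ 2 * L ≤ u 1 k y + C.blen 0 x + C.blen 1 y := by
    intro k x y hP
    have a1 := inf_lower (X 0 x) (X 1 y)
    have a2 := Submodule.finrank_mono (le_inf inf_le_left (hdec k x y hP))
    have a3 := Submodule.finrank_mono (le_inf inf_le_right (hdec k x y hP))
    have a4 := hX 0 x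
    have a5 := hX 1 y
    simp only [u]
    omega
  have bnd0 := avg_main (fun x y => C.P 0 (x, y)) (fun x y => C.P 1 (x, y))
    (fun x y => C.P_nonneg _ _) (fun x y => C.P_nonneg _ _)
    (by rw [← Fintype.sum_prod_type (f := C.P 0)]; exact C.P_sum 0)
    (marg1 C) (marg2 C) (fun x => (C.blen 0 x : ℝ)) (fun y => (C.blen 1 y : ℝ))
    (fun x => (u 0 0 x : ℝ)) (fun x => (u 0 1 x : ℝ)) (C.stor 0) L
    (by
      intro x x' y h0 h1
      have t := triple (X 0 x) (X 0 x') (X 1 y) (N 0) (N 1) hN (hdec 0 x y h0) (hdec 1 x' y h1)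
      have s := hS 0 x x'
      have b := hX 1 y
      have : 2 * L + u 0 1 x + u 0 0 x' ≤ C.stor 0 + 2 * C.blen 1 y := by
        simp only [u]
        omega
      exact_mod_cast this)
    (by
      intro x y h
      have t : ((2 * L : ℕ) : ℝ) ≤ ((u 0 0 x + C.blen 0 x + C.blen 1 y : ℕ) : ℝ) :=
        Nat.cast_le.mpr (hu 0 x y h).1
      push_cast at t
      linarith)
    (by
      intro x y h
      have t : ((2 * L : ℕ) : ℝ) ≤ ((u 0 1 x + C.blen 0 x + C.blen 1 y : ℕ) : ℝ) :=
        Nat.cast_le.mpr (hu 1 x y h).1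
      push_cast at t
      linarith)
  have bnd1 := avg_main (fun y x => C.P 0 (x, y)) (fun y x => C.P 1 (x, y))
    (fun x y => C.P_nonneg _ _) (fun x y => C.P_nonneg _ _)
    (by rw [Finset.sum_comm, ← Fintype.sum_prod_type (f := C.P 0)]; exact C.P_sum 0)
    (marg2 C) (marg1 C) (fun y => (C.blen 1 y : ℝ)) (fun x => (C.blen 0 x : ℝ))
    (fun y => (u 1 0 y : ℝ)) (fun y => (u 1 1 y : ℝ)) (C.stor 1) L
    (by
      intro y y' x h0 h1
      have t := triple (X 1 y) (X 1 y') (X 0 x) (N 0) (N 1) hN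
        (inf_comm (X 0 x) (X 1 y) ▸ hdec 0 x y h0) (inf_comm (X 0 x) (X 1 y') ▸ hdec 1 x y' h1)
      have s := hS 1 y y'
      have b := hX 0 x
      have : 2 * L + u 1 1 y + u 1 0 y' ≤ C.stor 1 + 2 * C.blen 0 x := by
        simp only [u]
        omega
      exact_mod_cast this)
    (by
      intro y x h
      have t : ((2 * L : ℕ) : ℝ) ≤ ((u 1 0 y + C.blen 0 x + C.blen 1 y : ℕ) : ℝ) :=
        Nat.cast_le.mpr (hu 0 x y h).2
      push_cast at t
      linarith)
    (by
      intro y x h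
      have t : ((2 * L : ℕ) : ℝ) ≤ ((u 1 1 y + C.blen 0 x + C.blen 1 y : ℕ) : ℝ) :=
        Nat.cast_le.mpr (hu 1 x y h).2
      push_cast at t
      linarith)
  have r0 : betaRate C 0 = ∑ x, ∑ y, C.P 0 (x, y) * (C.blen 0 x : ℝ) := by
    simp [betaRate, Fintype.sum_prod_type]
  have r1 : betaRate C 1 = ∑ x, ∑ y, C.P 0 (x, y) * (C.blen 1 y : ℝ) := by
    simp [betaRate, Fintype.sum_prod_type]
  rw [Finset.sum_comm, Finset.sum_comm (f := fun y x => C.P 0 (x, y) * (C.blen 0 x : ℝ))] at bnd1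
  rw [← r0, ← r1] at bnd0 bnd1
  push_cast
  linarith

end Main

/-- Every pair `(ᾱ, β̄)` achievable by linear (2,2) PIR codes satisfies
`ᾱ + 6β̄ ≥ 6`. -/
theorem statement7 (ab : ℝ × ℝ) (h : LinAchievable ab) : 6 ≤ ab.1 + 6 * ab.2 := by
  refine le_of_forall_pos_le_add fun δ hδ => ?_
  obtain ⟨L₀, hL₀⟩ := h (δ / 7) (by positivity)
  obtain ⟨C, hz, hl, ha, hb⟩ := hL₀ (max L₀ 1) (le_max_left _ _)
  have hk := code_bound C.base hz hl
  have hpos : (0 : ℝ) < ((max L₀ 1 : ℕ) : ℝ) := by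
    exact_mod_cast lt_of_lt_of_le one_pos (le_max_right L₀ 1)
  set l : ℝ := ((max L₀ 1 : ℕ) : ℝ)
  have : l * 6 ≤ l * (ab.1 + 6 * ab.2 + δ) := by linarith
  exact le_of_mul_le_mul_left this hpos

end PIR
end

section
/- For every integer t ≥ 1, the region R̃^{(t)}_in is contained in the achievable storage-retrieval rate region R of the (2,2) PIR problem, where R̃^{(t)}_in is defined as follows. Let (V1, V2) be independent uniform random variables on F_2^t × F_2^t. R̃^{(t)}_in is the set of pairs (ᾱ, β̄) for which there exist finite-valued random variables (X0, X1, X2, Y1, Y2) jointly distributed with (V1, V2) such that: (1) the joint distribution factorizes as P(V1,V2,X0,X1,X2,Y1,Y2) = P(V1,V2)·P(X0|V1,V2)·P(X1|V1,V2)·P(X2|V1,V2)·P(Y1|V1,V2)·P(Y2|V1,V2); (2) there exist deterministic functions with V1 = f_{1,1}(X0,X1,Y1) = f_{2,2}(X0,X2,Y2) and V2 = f_{1,2}(X0,X1,Y2) = f_{2,1}(X0,X2,Y1); (3) the rates are set as γ1^(0) = I(V1,V2;X0), γ1^(1) = I(V1,V2;X1), γ1^(2) = I(V1,V2;X2), γ2^(1)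 = I(V1,V2;Y1), γ2^(2) = I(V1,V2;Y2), β1^(0) = γ1^(0), β1^(1) = I(V1,V2;X1|X0), β1^(2) = I(V1,V2;X2|X0), β2^(1) = max(I(V1,V2;Y1|X0,X1), I(V1,V2;Y1|X0,X2)), β2^(2) = max(I(V1,V2;Y2|X0,X1), I(V1,V2;Y2|X0,X2)), α1^(0) = γ1^(0), and storage rates (α1^(1),α1^(2),α2^(1),α2^(2)) are chosen as: if γ1^(0)−β1^(0)+γ1^(1)−β1^(1)+γ1^(2)−β1^(2) < H(X0)+H(X1)+H(X2)−H(X0,X1,X2) then (α1^(0),α1^(1),α1^(2),γ1^(0),γ1^(1),γ1^(2)) ∈ R*_MD(((V1,V2),X0,X1,X2), ({X0,X1,X2})), otherwise (α1^(1),α1^(2)) = (β1^(1),β1^(2)); and if γ2^(1)−β2^(1)+γ2^(2)−β2^(2) < I(Y1;Y2) then (α2^(1),α2^(2),γ2^(1),γ2^(2)) ∈ R*_MD(((V1,V2),Y1,Y2), ({Y1,Y2})), otherwise (α2^(1),α2^(2)) = (β2^(1),β2^(2)); (4) 2t·ᾱ ≥ α1^(0)+α1^(1)+α1^(2)+α2^(1)+α2^(2)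 and 4t·β̄ ≥ 2β1^(0)+β1^(1)+β1^(2)+β2^(1)+β2^(2). -/
open scoped BigOperators

namespace PIR

variable {L : ℕ} {Q : Type} [Fintype Q] [DecidableEq Q]

/-- Probability that a random variable `X` (on finite sample space `Ω` with
probability mass function `p`) takes the value `x`. -/
noncomputable def prOf {Ω : Type} [Fintype Ω] {γ : Type} [DecidableEq γ]
    (p : Ω → ℝ) (X : Ω → γ) (x : γ) : ℝ :=
  ∑ ω : Ω, if X ω = x then p ω else 0

/-- Shannon entropy (in bits) of the random variable `X`. -/
noncomputable def ent {Ω : Type} [Fintype Ω] {γ : Type} [Fintype γ] [DecidableEq γ]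
    (p : Ω → ℝ) (X : Ω → γ) : ℝ :=
  ∑ x : γ, -(prOf p X x * Real.logb 2 (prOf p X x))

/-- Conditional entropy `H(X|Y) = H(X,Y) - H(Y)` (in bits). -/
noncomputable def condEnt {Ω : Type} [Fintype Ω] {γ δ : Type} [Fintype γ] [DecidableEq γ]
    [Fintype δ] [DecidableEq δ] (p : Ω → ℝ) (X : Ω → γ) (Y : Ω → δ) : ℝ :=
  ent p (fun ω => (X ω, Y ω)) - ent p Y

/-- Mutual information `I(X;Y)` (in bits). -/
noncomputable def mi {Ω : Type} [Fintype Ω] {γ δ : Type} [Fintype γ] [DecidableEq γ]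
    [Fintype δ] [DecidableEq δ] (p : Ω → ℝ) (X : Ω → γ) (Y : Ω → δ) : ℝ :=
  ent p X + ent p Y - ent p (fun ω => (X ω, Y ω))

/-- Conditional mutual information `I(X;Y|Z)` (in bits). -/
noncomputable def cmi {Ω : Type} [Fintype Ω] {γ δ ε : Type} [Fintype γ] [DecidableEq γ]
    [Fintype δ] [DecidableEq δ] [Fintype ε] [DecidableEq ε]
    (p : Ω → ℝ) (X : Ω → γ) (Y : Ω → δ) (Z : Ω → ε) : ℝ :=
  ent p (fun ω => (X ω, Z ω)) + ent p (fun ω => (Y ω, Z ω))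
    - ent p (fun ω => (X ω, Y ω, Z ω)) - ent p Z

/-- Joint entropy `H({U_i, i ∈ A})` of the subfamily indexed by `A`. -/
noncomputable def jEnt {Ω : Type} [Fintype Ω] {γ : Type} [Fintype γ] [DecidableEq γ]
    {M : ℕ} (p : Ω → ℝ) (U : Fin M → Ω → γ) (A : Finset (Fin M)) : ℝ :=
  ent p (fun ω => fun i : {i // i ∈ A} => U i.1 ω)

/-- Conditional joint entropy `H({U_j, j ∈ J} | {U_j', j' ∈ B})`. -/
noncomputable def cjEnt {Ω : Type} [Fintype Ω] {γ : Type} [Fintype γ] [DecidableEq γ]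
    {M : ℕ} (p : Ω → ℝ) (U : Fin M → Ω → γ) (J B : Finset (Fin M)) : ℝ :=
  jEnt p U (J ∪ B) - jEnt p U B

/-- Conditional joint entropy `H({U_i, i ∈ A} | S)`. -/
noncomputable def jEntCondS {Ω : Type} [Fintype Ω] {γ τ : Type} [Fintype γ] [DecidableEq γ]
    [Fintype τ] [DecidableEq τ] {M : ℕ}
    (p : Ω → ℝ) (U : Fin M → Ω → γ) (A : Finset (Fin M)) (S : Ω → τ) : ℝ :=
  ent p (fun ω => ((fun i : {i // i ∈ A} => U i.1 ω), S ω)) - ent p S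

/-- The binned multiple-description region `R*_MD((S,U_1,…,U_M), ({U_j, j∈A}, A ∈ recs))`:
the rate vectors `(R, R')` with `0 ≤ R_i ≤ R'_i`,
`Σ_{i∈A} R'_i ≥ Σ_{i∈A} H(U_i) − H({U_i,i∈A}|S)` for every `A ⊆ {1,…,M}`, and for every
reconstruction set `B ∈ recs` and every `J ⊆ B`,
`Σ_{j∈J}(R'_j − R_j) ≤ Σ_{j∈J} H(U_j) − H({U_j,j∈J} | {U_{j'}, j' ∈ B \ J})`. -/
def RstarMD {Ω γ τ : Type} [Fintype Ω] [Fintype γ] [DecidableEq γ] [Fintype τ] [DecidableEq τ]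
    {M : ℕ} (p : Ω → ℝ) (S : Ω → τ) (U : Fin M → Ω → γ)
    (recs : Finset (Finset (Fin M))) (R R' : Fin M → ℝ) : Prop :=
  (∀ i, 0 ≤ R i ∧ R i ≤ R' i) ∧
  (∀ A : Finset (Fin M), (∑ i ∈ A, ent p (U i)) - jEntCondS p U A S ≤ ∑ i ∈ A, R' i) ∧
  (∀ B ∈ recs, ∀ J ⊆ B,
    ∑ j ∈ J, (R' j - R j) ≤ (∑ j ∈ J, ent p (U j)) - cjEnt p U J (B \ J))

/-- Random variables `(X0,X1,X2,Y1,Y2)` (indexed `0,…,4`) jointly distributed with the pair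
of messages `(V1,V2)` which is uniform on `F_2^t × F_2^t`. -/
structure RVSetup (t : ℕ) where
  Ω : Type
  [fΩ : Fintype Ω]
  p : Ω → ℝ
  p_nonneg : ∀ ω, 0 ≤ p ω
  p_sum : ∑ ω : Ω, p ω = 1
  γ : Type
  [fγ : Fintype γ]
  [dγ : DecidableEq γ]
  V : Ω → Msg t × Msg t
  X : Fin 5 → Ω → γ
  V_unif : ∀ v : Msg t × Msg t, prOf p V v = ((2:ℝ)^(2*t))⁻¹

attribute [instance] RVSetup.fΩ RVSetup.fγ RVSetup.dγ

/-- The four reconstruction sets `{X0,X1,Y1},{X0,X1,Y2},{X0,X2,Y1},{X0,X2,Y2}` with the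
indexing `0 ↦ X0, 1 ↦ X1, 2 ↦ X2, 3 ↦ Y1, 4 ↦ Y2`. -/
def recs5 : Finset (Finset (Fin 5)) := {{0,1,3}, {0,1,4}, {0,2,3}, {0,2,4}}

/-- The inner-bound region `R^{(t)}_in`. -/
def RinMem (t : ℕ) (ab : ℝ × ℝ) : Prop :=
  ∃ S : RVSetup t,
    -- (1) decodability of V1 and V2 from the prescribed triples
    (∃ (f11 f12 f21 f22 : S.γ × S.γ × S.γ → Msg t),
      ∀ ω, S.p ω ≠ 0 →
        (S.V ω).1 = f11 (S.X 0 ω, S.X 1 ω, S.X 3 ω) ∧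
        (S.V ω).1 = f22 (S.X 0 ω, S.X 2 ω, S.X 4 ω) ∧
        (S.V ω).2 = f12 (S.X 0 ω, S.X 1 ω, S.X 4 ω) ∧
        (S.V ω).2 = f21 (S.X 0 ω, S.X 2 ω, S.X 3 ω)) ∧
    -- (2),(3),(4): existence of rates
    (∃ β γr : Fin 5 → ℝ,
      RstarMD S.p S.V S.X recs5 β γr ∧
      ∃ α : Fin 5 → ℝ,
        (∀ i, 0 ≤ α i ∧ α i ≤ β i) ∧
        ((γr 0 - β 0) + (γr 1 - β 1) + (γr 2 - β 2) <
            ent S.p (S.X 0) + ent S.p (S.X 1) + ent S.p (S.X 2)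
              - jEnt S.p S.X {0,1,2} →
          RstarMD S.p S.V ![S.X 0, S.X 1, S.X 2] {(Finset.univ : Finset (Fin 3))}
            ![α 0, α 1, α 2] ![γr 0, γr 1, γr 2]) ∧
        (¬ ((γr 0 - β 0) + (γr 1 - β 1) + (γr 2 - β 2) <
            ent S.p (S.X 0) + ent S.p (S.X 1) + ent S.p (S.X 2)
              - jEnt S.p S.X {0,1,2}) →
          α 0 = β 0 ∧ α 1 = β 1 ∧ α 2 = β 2) ∧
        ((γr 3 - β 3) + (γr 4 - β 4) < mi S.p (S.X 3) (S.X 4) →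
          RstarMD S.p S.V ![S.X 3, S.X 4] {(Finset.univ : Finset (Fin 2))}
            ![α 3, α 4] ![γr 3, γr 4]) ∧
        (¬ ((γr 3 - β 3) + (γr 4 - β 4) < mi S.p (S.X 3) (S.X 4)) →
          α 3 = β 3 ∧ α 4 = β 4) ∧
        2 * t * ab.1 ≥ α 0 + α 1 + α 2 + α 3 + α 4 ∧
        4 * t * ab.2 ≥ 2 * β 0 + β 1 + β 2 + β 3 + β 4)
/-- The inner-bound region `R̃^{(t)}_in` (Corollary 1): the joint distribution
factorizes as `P(V)·P(X0|V)·P(X1|V)·P(X2|V)·P(Y1|V)·P(Y2|V)` (expressed in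
cross-multiplied form), the decodability conditions hold, and the rates are set by
the explicit mutual-information formulas. -/
def RtildeMem (t : ℕ) (ab : ℝ × ℝ) : Prop :=
  ∃ S : RVSetup t,
    -- (1) factorization: X0, X1, X2, Y1, Y2 conditionally independent given (V1,V2)
    (∀ (v : Msg t × Msg t) (x0 x1 x2 y1 y2 : S.γ),
      prOf S.p (fun ω => (S.V ω, S.X 0 ω, S.X 1 ω, S.X 2 ω, S.X 3 ω, S.X 4 ω))
          (v, x0, x1, x2, y1, y2) * (prOf S.p S.V v) ^ 4 =
        prOf S.p (fun ω => (S.V ω, S.X 0 ω)) (v, x0) *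
        prOf S.p (fun ω => (S.V ω, S.X 1 ω)) (v, x1) *
        prOf S.p (fun ω => (S.V ω, S.X 2 ω)) (v, x2) *
        prOf S.p (fun ω => (S.V ω, S.X 3 ω)) (v, y1) *
        prOf S.p (fun ω => (S.V ω, S.X 4 ω)) (v, y2)) ∧
    -- (2) decodability of V1 and V2 from the prescribed triples
    (∃ (f11 f12 f21 f22 : S.γ × S.γ × S.γ → Msg t),
      ∀ ω, S.p ω ≠ 0 →
        (S.V ω).1 = f11 (S.X 0 ω, S.X 1 ω, S.X 3 ω) ∧
        (S.V ω).1 = f22 (S.X 0 ω, S.X 2 ω, S.X 4 ω) ∧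
        (S.V ω).2 = f12 (S.X 0 ω, S.X 1 ω, S.X 4 ω) ∧
        (S.V ω).2 = f21 (S.X 0 ω, S.X 2 ω, S.X 3 ω)) ∧
    -- (3),(4): rates set by the explicit formulas
    (let g0 := mi S.p S.V (S.X 0)
     let g1 := mi S.p S.V (S.X 1)
     let g2 := mi S.p S.V (S.X 2)
     let g3 := mi S.p S.V (S.X 3)
     let g4 := mi S.p S.V (S.X 4)
     let b0 := g0
     let b1 := cmi S.p S.V (S.X 1) (S.X 0)
     let b2 := cmi S.p S.V (S.X 2) (S.X 0)
     let b3 := max (cmi S.p S.V (S.X 3) (fun ω => (S.X 0 ω, S.X 1 ω)))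
                   (cmi S.p S.V (S.X 3) (fun ω => (S.X 0 ω, S.X 2 ω)))
     let b4 := max (cmi S.p S.V (S.X 4) (fun ω => (S.X 0 ω, S.X 1 ω)))
                   (cmi S.p S.V (S.X 4) (fun ω => (S.X 0 ω, S.X 2 ω)))
     let a0 := g0
     ∃ a1 a2 a3 a4 : ℝ,
       ((g0 - b0) + (g1 - b1) + (g2 - b2) <
            ent S.p (S.X 0) + ent S.p (S.X 1) + ent S.p (S.X 2) - jEnt S.p S.X {0,1,2} →
          RstarMD S.p S.V ![S.X 0, S.X 1, S.X 2] {(Finset.univ : Finset (Fin 3))}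
            ![a0, a1, a2] ![g0, g1, g2]) ∧
       (¬ ((g0 - b0) + (g1 - b1) + (g2 - b2) <
            ent S.p (S.X 0) + ent S.p (S.X 1) + ent S.p (S.X 2) - jEnt S.p S.X {0,1,2}) →
          a1 = b1 ∧ a2 = b2) ∧
       ((g3 - b3) + (g4 - b4) < mi S.p (S.X 3) (S.X 4) →
          RstarMD S.p S.V ![S.X 3, S.X 4] {(Finset.univ : Finset (Fin 2))}
            ![a3, a4] ![g3, g4]) ∧
       (¬ ((g3 - b3) + (g4 - b4) < mi S.p (S.X 3) (S.X 4)) →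
          a3 = b3 ∧ a4 = b4) ∧
       2 * t * ab.1 ≥ a0 + a1 + a2 + a3 + a4 ∧
       4 * t * ab.2 ≥ 2 * b0 + b1 + b2 + b3 + b4)

/-- marginal weight of the coordinates in `B` -/
noncomputable def mg {I A : Type} [Fintype I] [DecidableEq I] [Fintype A] [DecidableEq A]
    (P : (I → A) → ℝ) (B : Finset I) (z : I → A) : ℝ :=
  ∑ u : I → A, if ∀ i ∈ B, u i = z i then P u else 0

section hashing
variable {I A : Type} [Fintype I] [DecidableEq I] [Fintype A] [DecidableEq A]

theorem hash_count (N : ℕ) (z u : I → A) (J : Finset I) (l : I → ℕ) (hl : ∀ i, l i ≤ N)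
    (hne : ∀ i ∈ J, u i ≠ z i) :
    ((Finset.univ.filter (fun h : I → A → Fin N → ZMod 2 =>
      ∀ i ∈ J, ∀ k : Fin N, k.val < l i → h i (u i) k = h i (z i) k)).card : ℝ) * 2 ^ (∑ i ∈ J, l i)
      ≤ (Fintype.card (I → A → Fin N → ZMod 2) : ℝ) := by
  classical
  set S := Finset.univ.filter (fun h : I → A → Fin N → ZMod 2 =>
      ∀ i ∈ J, ∀ k : Fin N, k.val < l i → h i (u i) k = h i (z i) k) with hS
  let D := (i : {i // i ∈ J}) → (Fin (l i) → ZMod 2)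
  let ext : D → I → Fin N → ZMod 2 := fun d i k =>
    if hi : i ∈ J then (if hk : k.val < l i then d ⟨i, hi⟩ ⟨k.val, hk⟩ else 0) else 0
  let Φ : {h // h ∈ S} × D → (I → A → Fin N → ZMod 2) := fun p i a k =>
    p.1.1 i a k + if a = z i then ext p.2 i k else 0
  have key : ∀ (p : {h // h ∈ S} × D) i k, (hi : i ∈ J) → k.val < l i →
      Φ p i (z i) k - Φ p i (u i) k = ext p.2 i k := by
    intro p i k hi hk
    have h1 := (Finset.mem_filter.mp p.1.2).2 i hi k hk
    simp only [Φ, if_neg (hne i hi), if_true, h1]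
    ring
  have hinj : Function.Injective Φ := by
    intro p p' hpp
    have hd : p.2 = p'.2 := by
      funext i k
      have hk : k.val < N := lt_of_lt_of_le k.2 (hl _)
      have e1 := key p i.1 ⟨k.val, hk⟩ i.2 k.2
      have e2 := key p' i.1 ⟨k.val, hk⟩ i.2 k.2
      rw [hpp, e2] at e1
      simpa [ext, i.2] using e1.symm
    have hh : p.1 = p'.1 := by
      apply Subtype.ext
      funext i a k
      have := congrFun (congrFun (congrFun hpp i) a) k
      simp only [Φ, hd] at this
      exact add_right_cancel this
    exact Prod.ext hh hd
  have hc := Fintype.card_le_of_injective Φ hinj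
  have hD : Fintype.card D = 2 ^ (∑ i ∈ J, l i) := by
    simp only [D, Fintype.card_pi, Finset.prod_const, ZMod.card, Finset.card_univ, Fintype.card_fin]
    rw [Finset.prod_pow_eq_pow_sum]
    congr 1
    exact Finset.sum_coe_sort J l
  rw [Fintype.card_prod, hD, Fintype.card_coe] at hc
  exact_mod_cast hc

/-- `z` is confusable with some element of `T` under the hash `h`. -/
def Bad {N : ℕ} (T : Finset (I → A)) (B K : Finset I) (l : I → ℕ)
    (h : I → A → Fin N → ZMod 2) (z : I → A) : Prop :=
  ∃ u ∈ T, (∃ i ∈ B, u i ≠ z i) ∧ (∀ i ∈ K, u i = z i) ∧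
    ∀ i ∈ B, ∀ k : Fin N, k.val < l i → h i (u i) k = h i (z i) k

open Classical in
theorem bad_avg (N : ℕ) (P : (I → A) → ℝ) (hP : ∀ z, 0 ≤ P z) (T : Finset (I → A))
    (B K : Finset I) (l : I → ℕ) (hl : ∀ i, l i ≤ N) (lo c : ℝ) (hlo : 0 < lo) (hc : 0 ≤ c)
    (hT : ∀ u ∈ T, lo ≤ mg P B u) (hKB : K ⊆ B) (z : I → A)
    (hz : ∀ J ⊆ B \ K, J.Nonempty → mg P (B \ J) z ≤ c * lo * 2 ^ (∑ i ∈ J, l i)) :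
    ((Finset.univ.filter (fun h : I → A → Fin N → ZMod 2 => Bad T B K l h z)).card : ℝ)
      ≤ 2 ^ (Fintype.card I) * c * (Fintype.card (I → A → Fin N → ZMod 2) : ℝ) := by
  set M : ℝ := (Fintype.card (I → A → Fin N → ZMod 2) : ℝ) with hM
  let C : (I → A → Fin N → ZMod 2) → (I → A) → Prop := fun h u =>
    (∃ i ∈ B, u i ≠ z i) ∧ (∀ i ∈ K, u i = z i) ∧
    ∀ i ∈ B, ∀ k : Fin N, k.val < l i → h i (u i) k = h i (z i) k
  have step1 : ∀ h, lo * (if Bad T B K l h z then 1 else 0) ≤ ∑ u, if C h u then P u else 0 := by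
    intro h
    split_ifs with hb
    · obtain ⟨u, huT, h1, h2, h3⟩ := hb
      rw [mul_one]
      refine (hT u huT).trans ?_
      unfold mg
      apply Finset.sum_le_sum
      intro w _
      by_cases hw : ∀ i ∈ B, w i = u i
      · rw [if_pos hw, if_pos]
        refine ⟨?_, ?_, ?_⟩
        · obtain ⟨i, hi, hh⟩ := h1
          exact ⟨i, hi, by rw [hw i hi]; exact hh⟩
        · intro i hi; rw [hw i (hKB hi)]; exact h2 i hi
        · intro i hi k hk; rw [hw i hi]; exact h3 i hi k hk
      · rw [if_neg hw]; split_ifs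
        · exact hP _
        · exact le_rfl
    · rw [mul_zero]
      exact Finset.sum_nonneg fun u _ => by split_ifs; exacts [hP _, le_rfl]
  have step2 : ∀ u, (∑ h, if C h u then P u else 0) ≤
      ∑ J ∈ (B \ K).powerset.filter (·.Nonempty),
        (if ∀ i ∈ B \ J, u i = z i then P u else 0) * (M / 2 ^ (∑ i ∈ J, l i)) := by
    intro u
    have hnn : ∀ J ∈ (B \ K).powerset.filter (·.Nonempty),
        0 ≤ (if ∀ i ∈ B \ J, u i = z i then P u else 0) * (M / 2 ^ (∑ i ∈ J, l i)) := by
      intro J _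
      apply mul_nonneg
      · split_ifs; exacts [hP _, le_rfl]
      · positivity
    by_cases hu : (∃ i ∈ B, u i ≠ z i) ∧ (∀ i ∈ K, u i = z i)
    · set J := B.filter (fun i => u i ≠ z i) with hJ
      have hJm : J ∈ (B \ K).powerset.filter (·.Nonempty) := by
        simp only [Finset.mem_filter, Finset.mem_powerset]
        constructor
        · intro i hi
          rw [hJ, Finset.mem_filter] at hi
          rw [Finset.mem_sdiff]
          exact ⟨hi.1, fun hk => hi.2 (hu.2 i hk)⟩
        · obtain ⟨i, hi, h⟩ := hu.1
          exact ⟨i, by rw [hJ, Finset.mem_filter]; exact ⟨hi, h⟩⟩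
      refine le_trans ?_ (Finset.single_le_sum hnn hJm)
      rw [if_pos (by
        intro i hi
        rw [Finset.mem_sdiff, hJ, Finset.mem_filter] at hi
        by_contra hcon
        exact hi.2 ⟨hi.1, hcon⟩)]
      rw [← Finset.sum_filter, Finset.sum_const, nsmul_eq_mul, mul_comm]
      apply mul_le_mul_of_nonneg_left _ (hP u)
      rw [le_div_iff₀ (by positivity)]
      refine le_trans ?_ (hash_count N z u J l hl (fun i hi => (Finset.mem_filter.mp hi).2))
      apply mul_le_mul_of_nonneg_right _ (by positivity)
      norm_cast
      apply Finset.card_le_card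
      intro h hh
      rw [Finset.mem_filter] at hh ⊢
      exact ⟨hh.1, fun i hi => hh.2.2.2 i (Finset.mem_filter.mp hi).1⟩
    · refine le_trans (le_of_eq ?_) (Finset.sum_nonneg hnn)
      apply Finset.sum_eq_zero
      intro h _
      rw [if_neg]
      intro hC
      exact hu ⟨hC.1, hC.2.1⟩
  have total : lo * ((Finset.univ.filter
      (fun h : I → A → Fin N → ZMod 2 => Bad T B K l h z)).card : ℝ) ≤
      lo * (2 ^ (Fintype.card I) * c * M) := by
    calc lo * ((Finset.univ.filter
      (fun h : I → A → Fin N → ZMod 2 => Bad T B K l h z)).card : ℝ)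
        = ∑ h : I → A → Fin N → ZMod 2, lo * (if Bad T B K l h z then 1 else 0) := by
          rw [← Finset.mul_sum, Finset.sum_boole]
      _ ≤ ∑ h : I → A → Fin N → ZMod 2, ∑ u, if C h u then P u else 0 :=
          Finset.sum_le_sum fun h _ => step1 h
      _ = ∑ u, ∑ h : I → A → Fin N → ZMod 2, if C h u then P u else 0 := Finset.sum_comm
      _ ≤ ∑ u, ∑ J ∈ (B \ K).powerset.filter (·.Nonempty),
        (if ∀ i ∈ B \ J, u i = z i then P u else 0) * (M / 2 ^ (∑ i ∈ J, l i)) :=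
          Finset.sum_le_sum fun u _ => step2 u
      _ = ∑ J ∈ (B \ K).powerset.filter (·.Nonempty), mg P (B \ J) z * (M / 2 ^ (∑ i ∈ J, l i)) := by
          rw [Finset.sum_comm]
          apply Finset.sum_congr rfl
          intro J _
          rw [mg, Finset.sum_mul]
      _ ≤ ∑ J ∈ (B \ K).powerset.filter (·.Nonempty), c * lo * M := by
          apply Finset.sum_le_sum
          intro J hJ
          rw [Finset.mem_filter, Finset.mem_powerset] at hJ
          have := hz J hJ.1 hJ.2
          calc _ ≤ c * lo * 2 ^ (∑ i ∈ J, l i) * (M / 2 ^ (∑ i ∈ J, l i)) :=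
                mul_le_mul_of_nonneg_right this (by positivity)
            _ = c * lo * M := by field_simp
      _ ≤ 2 ^ (Fintype.card I) * (c * lo * M) := by
          rw [Finset.sum_const, nsmul_eq_mul]
          apply mul_le_mul_of_nonneg_right _ (by positivity)
          have : ((B \ K).powerset.filter (·.Nonempty)).card ≤ 2 ^ (Fintype.card I) := by
            refine (Finset.card_filter_le _ _).trans ?_
            rw [Finset.card_powerset]
            exact Nat.pow_le_pow_right (by norm_num) (Finset.card_le_univ _)
          exact_mod_cast this
      _ = _ := by ring
  exact le_of_mul_le_mul_left total hlo

open Classical in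
/-- One-shot random hashing lemma. -/
theorem oneshot {ι : Type} [Fintype ι] (P : (I → A) → ℝ) (hP : ∀ z, 0 ≤ P z) (T : Finset (I → A))
    (B K : ι → Finset I) (l : ι → I → ℕ) (lo : Finset I → ℝ) (hlo : ∀ B, 0 < lo B)
    (c : ℝ) (hc : 0 ≤ c)
    (hT : ∀ B, ∀ u ∈ T, lo B ≤ mg P B u) (hKB : ∀ τ, K τ ⊆ B τ)
    (hz : ∀ τ, ∀ z ∈ T, ∀ J ⊆ B τ \ K τ, J.Nonempty →
      mg P (B τ \ J) z ≤ c * lo (B τ) * 2 ^ (∑ i ∈ J, l τ i))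
    (hcs : (Fintype.card ι : ℝ) * (2 ^ (Fintype.card I) * c) ≤ 1 / 2)
    (R : Finset I) (r : I → ℕ) :
    ∃ (h : I → A → ℕ → ZMod 2) (G : Finset (I → A)), G ⊆ T ∧
      (T.card : ℝ) ≤ 2 * 2 ^ (∑ i ∈ R, r i) * G.card ∧
      (∀ z ∈ G, ∀ z' ∈ G, ∀ i ∈ R, ∀ k < r i, h i (z i) k = h i (z' i) k) ∧
      (∀ τ, ∀ z ∈ G, ∀ u ∈ G, (∀ i ∈ K τ, u i = z i) →
        (∀ i ∈ B τ, ∀ k < l τ i, h i (u i) k = h i (z i) k) → ∀ i ∈ B τ, u i = z i) := by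
  obtain ⟨N, hN⟩ : ∃ N : ℕ, (∀ τ i, l τ i ≤ N) ∧ ∀ i, r i ≤ N := by
    refine ⟨∑ τ, ∑ i, l τ i + ∑ i, r i, ?_, ?_⟩
    · intro τ i
      refine le_trans ?_ (Nat.le_add_right _ _)
      refine le_trans (Finset.single_le_sum (f := fun i => l τ i) (fun _ _ => Nat.zero_le _)
        (Finset.mem_univ i)) ?_
      exact Finset.single_le_sum (f := fun τ => ∑ i, l τ i) (fun _ _ => Nat.zero_le _)
        (Finset.mem_univ τ)
    · intro i
      refine le_trans ?_ (Nat.le_add_left _ _)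
      exact Finset.single_le_sum (f := fun i => r i) (fun _ _ => Nat.zero_le _)
        (Finset.mem_univ i)
  let Hs := I → A → Fin N → ZMod 2
  -- average number of bad z
  have havg : ∑ h : Hs, ((T.filter (fun z => ∃ τ, Bad T (B τ) (K τ) (l τ) h z)).card : ℝ) ≤
      ∑ h : Hs, (T.card : ℝ) / 2 := by
    calc ∑ h : Hs, ((T.filter (fun z => ∃ τ, Bad T (B τ) (K τ) (l τ) h z)).card : ℝ)
        = ∑ h : Hs, ∑ z ∈ T, if (∃ τ, Bad T (B τ) (K τ) (l τ) h z) then (1:ℝ) else 0 := by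
          apply Finset.sum_congr rfl; intro h _; rw [Finset.sum_boole]
      _ ≤ ∑ h : Hs, ∑ z ∈ T, ∑ τ, if (Bad T (B τ) (K τ) (l τ) h z) then (1:ℝ) else 0 := by
          apply Finset.sum_le_sum; intro h _
          apply Finset.sum_le_sum; intro z _
          have hnn : ∀ τ ∈ (Finset.univ : Finset ι),
            (0:ℝ) ≤ if (Bad T (B τ) (K τ) (l τ) h z) then (1:ℝ) else 0 := by
            intro τ _; split_ifs <;> norm_num
          split_ifs with hb
          · obtain ⟨τ, hτ⟩ := hb
            refine le_trans ?_ (Finset.single_le_sum hnn (Finset.mem_univ τ))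
            rw [if_pos hτ]
          · exact Finset.sum_nonneg hnn
      _ = ∑ z ∈ T, ∑ τ, ∑ h : Hs, if (Bad T (B τ) (K τ) (l τ) h z) then (1:ℝ) else 0 := by
          rw [Finset.sum_comm]
          apply Finset.sum_congr rfl; intro z _
          rw [Finset.sum_comm]
      _ ≤ ∑ z ∈ T, ∑ τ : ι, 2 ^ (Fintype.card I) * c * (Fintype.card Hs : ℝ) := by
          apply Finset.sum_le_sum; intro z hzT
          apply Finset.sum_le_sum; intro τ _
          rw [Finset.sum_boole]
          exact bad_avg N P hP T (B τ) (K τ) (l τ) (hN.1 τ) (lo (B τ)) c (hlo _) hc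
            (hT _) (hKB τ) z (hz τ z hzT)
      _ = T.card * ((Fintype.card ι : ℝ) * (2 ^ (Fintype.card I) * c)) * (Fintype.card Hs : ℝ) := by
          simp only [Finset.sum_const, nsmul_eq_mul, Finset.card_univ]; ring
      _ ≤ T.card * (1/2) * (Fintype.card Hs : ℝ) := by gcongr
      _ = ∑ h : Hs, (T.card : ℝ) / 2 := by
          simp only [Finset.sum_const, nsmul_eq_mul, Finset.card_univ]; ring
  obtain ⟨h, -, hh⟩ := Finset.exists_le_of_sum_le (Finset.univ_nonempty (α := Hs)) havg
  set G0 := T.filter (fun z => ¬ ∃ τ, Bad T (B τ) (K τ) (l τ) h z) with hG0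
  have hG0c : (T.card : ℝ) / 2 ≤ G0.card := by
    have := Finset.card_filter_add_card_filter_not (s := T) (fun z => ∃ τ, Bad T (B τ) (K τ) (l τ) h z)
    have h2 : ((T.filter (fun z => ∃ τ, Bad T (B τ) (K τ) (l τ) h z)).card : ℝ) + G0.card = T.card := by
      exact_mod_cast this
    linarith
  -- pigeonhole
  let Fv : (I → A) → ((i : {i // i ∈ R}) → Fin (r i) → ZMod 2) := fun z i k =>
    h i (z i) ⟨k.val, lt_of_lt_of_le k.2 (hN.2 _)⟩
  have hD : Fintype.card ((i : {i // i ∈ R}) → Fin (r i) → ZMod 2) = 2 ^ (∑ i ∈ R, r i) := by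
    simp only [Fintype.card_pi, Finset.prod_const, ZMod.card, Finset.card_univ, Fintype.card_fin]
    rw [Finset.prod_pow_eq_pow_sum]
    congr 1
    exact Finset.sum_coe_sort R r
  obtain ⟨f, hf⟩ : ∃ f, (G0.card : ℝ) ≤ 2 ^ (∑ i ∈ R, r i) * (G0.filter (fun z => Fv z = f)).card := by
    by_contra hcon
    push Not at hcon
    have hs : G0.card = ∑ f, (G0.filter (fun z => Fv z = f)).card :=
      Finset.card_eq_sum_card_fiberwise (fun z _ => Finset.mem_coe.mpr (Finset.mem_univ _))
    have : ∑ f : ((i : {i // i ∈ R}) → Fin (r i) → ZMod 2),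
        (2:ℝ) ^ (∑ i ∈ R, r i) * (G0.filter (fun z => Fv z = f)).card <
        ∑ f : ((i : {i // i ∈ R}) → Fin (r i) → ZMod 2), (G0.card : ℝ) :=
      Finset.sum_lt_sum_of_nonempty Finset.univ_nonempty (fun f _ => hcon f)
    rw [← Finset.mul_sum, Finset.sum_const, Finset.card_univ, hD, nsmul_eq_mul] at this
    rw [← Nat.cast_sum, ← hs] at this
    push_cast at this
    exact lt_irrefl _ this
  refine ⟨fun i a k => if hk : k < N then h i a ⟨k, hk⟩ else 0, G0.filter (fun z => Fv z = f), ?_, ?_, ?_, ?_⟩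
  · exact (Finset.filter_subset _ _).trans (Finset.filter_subset _ _)
  · nlinarith
  · intro z hz1 z' hz' i hi k hk
    have e := (Finset.mem_filter.mp hz1).2.trans (Finset.mem_filter.mp hz').2.symm
    have := congrFun (congrFun e ⟨i, hi⟩) ⟨k, hk⟩
    have hkN : k < N := lt_of_lt_of_le hk (hN.2 i)
    simpa [Fv, hkN] using this
  · intro τ z hzG u huG hK hcol i hi
    have hz0 := (Finset.mem_filter.mp (Finset.mem_filter.mp hzG).1).2
    by_contra hne
    apply hz0
    refine ⟨τ, u, (Finset.mem_filter.mp (Finset.mem_filter.mp huG).1).1, ⟨i, hi, hne⟩, hK, ?_⟩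
    intro i' hi' k hk
    have := hcol i' hi' k.val hk
    simpa [k.2] using this

end hashing
section typical

theorem sum_pi_prod {Z : Type} [Fintype Z] (n : ℕ) (f : Fin n → Z → ℝ) :
    ∑ z : Fin n → Z, ∏ j, f j (z j) = ∏ j, ∑ y, f j y := by
  rw [Finset.prod_univ_sum, Fintype.piFinset_univ]

/-- second moment of a sum of centred iid variables -/
theorem second_moment {Z : Type} [Fintype Z] (q : Z → ℝ) (hs : ∑ z, q z = 1)
    (g : Z → ℝ) (hg : ∑ z, q z * g z = 0) (n : ℕ) :
    (∑ z : Fin n → Z, (∏ j, q (z j)) * (∑ j, g (z j)) = 0) ∧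
    ∑ z : Fin n → Z, (∏ j, q (z j)) * (∑ j, g (z j)) ^ 2 = n * ∑ y, q y * g y ^ 2 := by
  induction n with
  | zero => simp
  | succ n ih =>
    have hone : ∑ z : Fin n → Z, (∏ j, q (z j)) = 1 := by
      rw [sum_pi_prod n (fun _ => q)]; simp [hs]
    have hsplit : ∀ F : (Fin (n+1) → Z) → ℝ,
        ∑ z, F z = ∑ y : Z, ∑ z : Fin n → Z, F (Fin.cons y z) := by
      intro F
      rw [← Fintype.sum_prod_type']
      exact (Fintype.sum_equiv (Fin.consEquiv (fun _ => Z)) _ _ (fun x => rfl)).symm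
    constructor
    · rw [hsplit]
      simp only [Fin.prod_univ_succ, Fin.sum_univ_succ, Fin.cons_zero, Fin.cons_succ]
      have : ∀ y, ∑ z : Fin n → Z, q y * (∏ j, q (z j)) * (g y + ∑ j, g (z j)) =
          q y * g y := by
        intro y
        have e : ∀ z : Fin n → Z, q y * (∏ j, q (z j)) * (g y + ∑ j, g (z j)) =
          q y * g y * (∏ j, q (z j)) + q y * ((∏ j, q (z j)) * ∑ j, g (z j)) := by
          intro z; ring
        simp only [e, Finset.sum_add_distrib, ← Finset.mul_sum, hone, ih.1]
        ring
      simp only [this, hg]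
    · rw [hsplit]
      simp only [Fin.prod_univ_succ, Fin.sum_univ_succ, Fin.cons_zero, Fin.cons_succ]
      have : ∀ y, ∑ z : Fin n → Z, q y * (∏ j, q (z j)) * (g y + ∑ j, g (z j)) ^ 2 =
          q y * g y ^ 2 + q y * (n * ∑ y, q y * g y ^ 2) := by
        intro y
        have e : ∀ z : Fin n → Z, q y * (∏ j, q (z j)) * (g y + ∑ j, g (z j)) ^ 2 =
          q y * g y ^ 2 * (∏ j, q (z j)) + (2 * q y * g y) * ((∏ j, q (z j)) * ∑ j, g (z j))
          + q y * ((∏ j, q (z j)) * (∑ j, g (z j)) ^ 2) := by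
          intro z; ring
        simp only [e, Finset.sum_add_distrib, ← Finset.mul_sum, hone, ih.1, ih.2]
        ring
      simp only [this, Finset.sum_add_distrib, ← Finset.sum_mul, hs]
      push_cast; ring

/-- Chebyshev -/
theorem chebyshev {Z : Type} [Fintype Z] (q : Z → ℝ) (hq : ∀ z, 0 ≤ q z) (hs : ∑ z, q z = 1)
    (g : Z → ℝ) (n : ℕ) (δ : ℝ) (hδ : 0 < δ) :
    ∑ z : Fin n → Z, (if n * δ < |∑ j, g (z j) - n * ∑ y, q y * g y| then ∏ j, q (z j) else 0) * (n * δ) ^ 2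
      ≤ n * ∑ y, q y * (g y - ∑ y, q y * g y) ^ 2 := by
  set μ := ∑ y, q y * g y with hμ
  have h2 := (second_moment q hs (fun y => g y - μ) (by
    simp only [mul_sub, Finset.sum_sub_distrib, ← Finset.sum_mul, hs, ← hμ]; ring) n).2
  rw [← h2]
  apply Finset.sum_le_sum
  intro z _
  have e : ∑ j, (g (z j) - μ) = ∑ j, g (z j) - n * μ := by
    rw [Finset.sum_sub_distrib]; simp
  have hpr : 0 ≤ ∏ j, q (z j) := Finset.prod_nonneg fun _ _ => hq _
  rw [e]
  split_ifs with h
  · apply mul_le_mul_of_nonneg_left _ hpr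
    rw [← sq_abs (∑ j, g (z j) - n * μ)]
    exact pow_le_pow_left₀ (by positivity) h.le 2
  · rw [zero_mul]; positivity

variable {I Γ : Type} [Fintype I] [DecidableEq I] [Fintype Γ] [DecidableEq Γ]

/-- product weight -/
noncomputable def Pn (q : (I → Γ) → ℝ) (n : ℕ) (z : I → Fin n → Γ) : ℝ := ∏ j, q (fun i => z i j)

/-- joint entropy of the coordinates in `B` -/
noncomputable def HH (q : (I → Γ) → ℝ) (B : Finset I) : ℝ := ∑ y, q y * -Real.logb 2 (mg q B y)

theorem mg_nonneg {A : Type} [Fintype A] [DecidableEq A] (q : (I → A) → ℝ) (hq : ∀ z, 0 ≤ q z) (B : Finset I) (z) : 0 ≤ mg q B z :=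
  Finset.sum_nonneg fun u _ => by split_ifs; exacts [hq _, le_rfl]

theorem mg_ge {A : Type} [Fintype A] [DecidableEq A] (q : (I → A) → ℝ) (hq : ∀ z, 0 ≤ q z) (B : Finset I) (z) : q z ≤ mg q B z := by
  have := Finset.single_le_sum (f := fun u => if ∀ i ∈ B, u i = z i then q u else 0)
    (fun u _ => by split_ifs; exacts [hq _, le_rfl]) (Finset.mem_univ z)
  simpa [mg] using this

theorem mg_univ {A : Type} [Fintype A] [DecidableEq A] (q : (I → A) → ℝ) (z) : mg q Finset.univ z = q z := by
  unfold mg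
  rw [Finset.sum_eq_single z]
  · simp
  · intro u _ hu
    rw [if_neg]
    intro h
    exact hu (funext fun i => h i (Finset.mem_univ i))
  · simp

theorem mg_Pn (q : (I → Γ) → ℝ) (n : ℕ) (B : Finset I) (z : I → Fin n → Γ) :
    mg (Pn q n) B z = ∏ j, mg q B (fun i => z i j) := by
  unfold mg
  rw [← sum_pi_prod n (fun j (y : I → Γ) => if ∀ i ∈ B, y i = z i j then q y else 0)]
  refine Fintype.sum_equiv (Equiv.piComm (fun (_ : I) (_ : Fin n) => Γ)) _ _ ?_
  intro u
  simp only [Pn, Equiv.piComm_apply]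
  by_cases h : ∀ i ∈ B, u i = z i
  · rw [if_pos h]
    apply Finset.prod_congr rfl
    intro j _
    rw [if_pos]
    · rfl
    · intro i hi
      exact congrFun (h i hi) j
  · rw [if_neg h]
    push Not at h
    obtain ⟨i, hi, hne⟩ := h
    obtain ⟨j, hj⟩ := Function.ne_iff.mp hne
    symm
    apply Finset.prod_eq_zero (Finset.mem_univ j)
    rw [if_neg]
    intro hh
    exact hj (hh i hi)

theorem typical (q : (I → Γ) → ℝ) (hq : ∀ z, 0 ≤ q z) (hs : ∑ z, q z = 1) (δ : ℝ) (hδ : 0 < δ) :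
    ∃ n0 : ℕ, ∀ n ≥ n0, ∃ T : Finset (I → Fin n → Γ),
      (∀ z ∈ T, ∀ j, 0 < q (fun i => z i j)) ∧
      (∀ z ∈ T, ∀ B, (2:ℝ) ^ (-(n * (HH q B + δ))) ≤ mg (Pn q n) B z) ∧
      (∀ z ∈ T, ∀ B, mg (Pn q n) B z ≤ (2:ℝ) ^ (-(n * (HH q B - δ)))) ∧
      (1/2 : ℝ) * (2:ℝ) ^ (n * (HH q Finset.univ - δ)) ≤ T.card := by
  classical
  let g : Finset I → (I → Γ) → ℝ := fun B y => -Real.logb 2 (mg q B y)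
  let S : ℝ := ∑ B : Finset I, ∑ y, q y * (g B y - HH q B) ^ 2
  obtain ⟨n0, hn0⟩ := exists_nat_gt (2 * S / δ ^ 2)
  refine ⟨n0 + 1, fun n hn => ?_⟩
  have hnpos : (0:ℝ) < n := by exact_mod_cast (by omega : 0 < n)
  have hnS : 2 * S ≤ n * δ ^ 2 := by
    have : (n0:ℝ) ≤ n := by exact_mod_cast (by omega : n0 ≤ n)
    rw [div_lt_iff₀ (by positivity)] at hn0
    nlinarith [sq_nonneg δ]
  let T : Finset (I → Fin n → Γ) := Finset.univ.filter (fun z => (∀ j, 0 < q (fun i => z i j)) ∧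
    ∀ B, |∑ j, g B (fun i => z i j) - n * HH q B| ≤ n * δ)
  have hprod : ∀ z ∈ T, ∀ B, mg (Pn q n) B z = (2:ℝ) ^ (-∑ j, g B (fun i => z i j)) := by
    intro z hz B
    rw [mg_Pn, ← Finset.sum_neg_distrib, Real.rpow_sum_of_pos (by norm_num)]
    apply Finset.prod_congr rfl
    intro j _
    simp only [g, neg_neg]
    rw [Real.rpow_logb (by norm_num) (by norm_num)]
    exact lt_of_lt_of_le ((Finset.mem_filter.mp hz).2.1 j) (mg_ge q hq B _)
  have hup : ∀ z ∈ T, ∀ B, mg (Pn q n) B z ≤ (2:ℝ) ^ (-(n * (HH q B - δ))) := by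
    intro z hz B
    rw [hprod z hz B]
    apply Real.rpow_le_rpow_of_exponent_le (by norm_num)
    have := abs_le.mp ((Finset.mem_filter.mp hz).2.2 B)
    linarith [this.1]
  refine ⟨T, fun z hz => (Finset.mem_filter.mp hz).2.1, ?_, hup, ?_⟩
  · intro z hz B
    rw [hprod z hz B]
    apply Real.rpow_le_rpow_of_exponent_le (by norm_num)
    have := abs_le.mp ((Finset.mem_filter.mp hz).2.2 B)
    linarith [this.2]
  · -- mass of T
    have hmass : (1/2 : ℝ) ≤ ∑ z ∈ T, Pn q n z := by
      have hPn : ∀ z, 0 ≤ Pn q n z := fun z => Finset.prod_nonneg fun _ _ => hq _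
      have htot : ∑ z, Pn q n z = 1 := by
        have := sum_pi_prod n (fun _ => q)
        rw [hs] at this
        simp only [Finset.prod_const_one] at this
        rw [← this]
        exact Fintype.sum_equiv (Equiv.piComm (fun (_ : I) (_ : Fin n) => Γ)) _ _ (fun u => rfl)
      have hB : ∀ B, (∑ z : I → Fin n → Γ, if n * δ < |∑ j, g B (fun i => z i j) - n * HH q B|
          then Pn q n z else 0) * (n * δ) ^ 2 ≤ n * ∑ y, q y * (g B y - HH q B) ^ 2 := by
        intro B
        have := chebyshev q hq hs (g B) n δ hδ
        rw [Finset.sum_mul]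
        refine le_trans (le_of_eq ?_) this
        exact Fintype.sum_equiv (Equiv.piComm (fun (_ : I) (_ : Fin n) => Γ)) _ _ (fun u => rfl)
      have hle : ∀ z, Pn q n z ≤ (if z ∈ T then Pn q n z else 0) +
          ∑ B : Finset I, if n * δ < |∑ j, g B (fun i => z i j) - n * HH q B|
          then Pn q n z else 0 := by
        intro z
        have hnn : ∀ B ∈ (Finset.univ : Finset (Finset I)), 0 ≤ if n * δ < |∑ j, g B (fun i => z i j) - n * HH q B|
          then Pn q n z else 0 := fun B _ => by split_ifs; exacts [hPn _, le_rfl]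
        by_cases hzT : z ∈ T
        · rw [if_pos hzT]
          linarith [Finset.sum_nonneg hnn]
        · rw [if_neg hzT, zero_add]
          by_cases hpos : ∀ j, 0 < q (fun i => z i j)
          · have : ∃ B, n * δ < |∑ j, g B (fun i => z i j) - n * HH q B| := by
              by_contra hcon
              push Not at hcon
              exact hzT (Finset.mem_filter.mpr ⟨Finset.mem_univ _, hpos, hcon⟩)
            obtain ⟨B, hB⟩ := this
            refine le_trans ?_ (Finset.single_le_sum hnn (Finset.mem_univ B))
            rw [if_pos hB]
          · push Not at hpos
            obtain ⟨j, hj⟩ := hpos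
            have : Pn q n z = 0 := Finset.prod_eq_zero (Finset.mem_univ j) (le_antisymm hj (hq _))
            rw [this]
            simp
      have h1 : (1:ℝ) ≤ ∑ z ∈ T, Pn q n z + ∑ B : Finset I, ∑ z : I → Fin n → Γ,
          if n * δ < |∑ j, g B (fun i => z i j) - n * HH q B| then Pn q n z else 0 := by
        rw [← htot]
        refine (Finset.sum_le_sum fun z _ => hle z).trans (le_of_eq ?_)
        rw [Finset.sum_add_distrib, Finset.sum_comm, ← Finset.sum_filter]
        simp
      have h2 : (∑ B : Finset I, ∑ z : I → Fin n → Γ,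
          if n * δ < |∑ j, g B (fun i => z i j) - n * HH q B| then Pn q n z else 0) * (n * δ)^2
          ≤ n * S := by
        rw [Finset.sum_mul, Finset.mul_sum]
        exact Finset.sum_le_sum fun B _ => hB B
      set E := ∑ B : Finset I, ∑ z : I → Fin n → Γ,
          if n * δ < |∑ j, g B (fun i => z i j) - n * HH q B| then Pn q n z else 0
      have h3 : E * (n * δ^2) ≤ S := by
        have : n * (E * (n * δ^2)) ≤ n * S := by linarith [h2, (by ring : n * (E * (n * δ^2)) = E * (n*δ)^2)]
        exact le_of_mul_le_mul_left this hnpos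
      have h4 : E ≤ 1/2 := by
        have hp : 0 < n * δ^2 := by positivity
        by_contra hcon
        push Not at hcon
        nlinarith
      linarith
    have hlast : ∑ z ∈ T, Pn q n z ≤ T.card * (2:ℝ) ^ (-(n * (HH q Finset.univ - δ))) := by
      rw [← nsmul_eq_mul, ← Finset.sum_const]
      apply Finset.sum_le_sum
      intro z hz
      have := hup z hz Finset.univ
      rwa [mg_univ] at this
    rw [Real.rpow_neg (by norm_num)] at hlast
    have hp : (0:ℝ) < (2:ℝ) ^ (n * (HH q Finset.univ - δ)) := by positivity
    have := hmass.trans hlast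
    rw [← div_eq_mul_inv, le_div_iff₀ hp] at this
    exact this

end typical
section assembly

theorem covering {W : Type} [AddCommGroup W] [Fintype W] [DecidableEq W] (G : Finset W) (ρ : ℝ)
    (m : ℕ) (hρ0 : 0 ≤ ρ) (hG : ρ * Fintype.card W ≤ G.card)
    (hm : Real.log (Fintype.card W) < ρ * m) :
    ∃ s : Fin m → W, ∀ w, ∃ j, w - s j ∈ G := by
  classical
  by_contra hcon
  push Not at hcon
  set M := Fintype.card W with hM
  have hMpos : (0:ℝ) < M := by exact_mod_cast Fintype.card_pos
  have hfib : ∀ w, (Finset.univ.filter (fun s : Fin m → W => ∀ j, w - s j ∉ G)).card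
      = (M - G.card) ^ m := by
    intro w
    have : (Finset.univ.filter (fun s : Fin m → W => ∀ j, w - s j ∉ G)) =
        Fintype.piFinset (fun _ : Fin m => Finset.univ.filter (fun x => w - x ∉ G)) := by
      ext s; simp
    rw [this, Fintype.card_piFinset]
    simp only [Finset.prod_const, Finset.card_univ, Fintype.card_fin]
    congr 1
    have : Finset.univ.filter (fun x => w - x ∉ G) = (Finset.univ \ G).map
        ⟨fun x => w - x, fun a b h => by simpa using h⟩ := by
      ext x
      simp only [Finset.mem_filter, Finset.mem_univ, true_and, Finset.mem_map, Finset.mem_sdiff]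
      constructor
      · intro hx; exact ⟨w - x, hx, sub_sub_cancel w x⟩
      · rintro ⟨a, ha, rfl⟩
        show w - (w - a) ∉ G
        rwa [sub_sub_cancel]
    rw [this, Finset.card_map, Finset.card_sdiff_of_subset (Finset.subset_univ _), Finset.card_univ]
  have hle : Fintype.card (Fin m → W) ≤ ∑ w : W, (M - G.card) ^ m := by
    rw [← Finset.card_univ]
    refine (Finset.card_le_card (t := Finset.univ.biUnion (fun w : W =>
      Finset.univ.filter (fun s : Fin m → W => ∀ j, w - s j ∉ G))) ?_).trans ?_
    · intro s _
      obtain ⟨w, hw⟩ := hcon s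
      simp only [Finset.mem_biUnion, Finset.mem_filter, Finset.mem_univ, true_and]
      exact ⟨w, hw⟩
    · refine Finset.card_biUnion_le.trans ?_
      exact Finset.sum_le_sum fun w _ => (hfib w).le
  have hGM : G.card ≤ M := Finset.card_le_univ G
  rw [Fintype.card_fun, Fintype.card_fin, Finset.sum_const, Finset.card_univ, smul_eq_mul,
    ← hM] at hle
  have hle' : (M:ℝ) ^ m ≤ M * ((M:ℝ) - G.card) ^ m := by
    have : ((M ^ m : ℕ) : ℝ) ≤ ((M * (M - G.card) ^ m : ℕ) : ℝ) := by exact_mod_cast hle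
    push_cast [Nat.cast_sub hGM] at this
    exact this
  have h1 : ((M:ℝ) - G.card) ^ m ≤ (M * Real.exp (-ρ)) ^ m := by
    apply pow_le_pow_left₀
    · have : (G.card : ℝ) ≤ M := by exact_mod_cast hGM
      linarith
    · have := Real.add_one_le_exp (-ρ)
      nlinarith
  have h2 : (M:ℝ) ^ m ≤ M * (M * Real.exp (-ρ)) ^ m := hle'.trans (by gcongr)
  rw [mul_pow, ← Real.exp_nat_mul] at h2
  have h3 : (1:ℝ) ≤ M * Real.exp (m * -ρ) := by
    have hp : (0:ℝ) < (M:ℝ) ^ m := by positivity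
    have : (M:ℝ)^m * 1 ≤ (M:ℝ)^m * (M * Real.exp (m * -ρ)) := by linarith [h2]
    exact le_of_mul_le_mul_left this hp
  have h4 : (M:ℝ) < Real.exp (ρ * m) := by
    rw [← Real.exp_log hMpos]; exact Real.exp_lt_exp.mpr hm
  have h5 : (M:ℝ) * Real.exp (m * -ρ) < Real.exp (ρ * m) * Real.exp (m * -ρ) :=
    mul_lt_mul_of_pos_right h4 (Real.exp_pos _)
  rw [← Real.exp_add] at h5
  have : ρ * m + m * -ρ = 0 := by ring
  rw [this, Real.exp_zero] at h5
  linarith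

theorem bits_enc {W : Type} (κ : ℕ) (j : W → Fin (2 ^ κ)) (b : Fin 5 → W → ℕ → ZMod 2)
    (S : Finset (Fin 5)) (s : Fin 5 → ℕ) :
    ∃ f : W → (Fin (κ + ∑ i ∈ S, s i) → ZMod 2), ∀ w w', f w = f w' ↔
      (j w = j w' ∧ ∀ i ∈ S, ∀ k < s i, b i w k = b i w' k) := by
  let D := Fin (2 ^ κ) × ((i : {i // i ∈ S}) → Fin (s i) → ZMod 2)
  have hcard : Fintype.card D ≤ Fintype.card (Fin (κ + ∑ i ∈ S, s i) → ZMod 2) := by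
    simp only [D, Fintype.card_prod, Fintype.card_pi, Finset.prod_const, ZMod.card,
      Finset.card_univ, Fintype.card_fin]
    rw [Finset.prod_pow_eq_pow_sum, pow_add]
    apply le_of_eq
    congr 2
    exact Finset.sum_coe_sort S s
  obtain ⟨e⟩ := Function.Embedding.nonempty_of_card_le hcard
  refine ⟨fun w => e (j w, fun i k => b i w k), fun w w' => ?_⟩
  rw [e.injective.eq_iff, Prod.mk.injEq]
  constructor
  · rintro ⟨h1, h2⟩
    refine ⟨h1, fun i hi k hk => ?_⟩
    exact congrFun (congrFun h2 ⟨i, hi⟩) ⟨k, hk⟩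
  · rintro ⟨h1, h2⟩
    refine ⟨h1, ?_⟩
    funext i k
    exact h2 i i.2 k k.2

theorem mkCode (L : ℕ) (σ : Fin 2 → ℕ) (lam : Fin 2 → Fin 2 → ℕ)
    (st : (n : Fin 2) → Msg L × Msg L → (Fin (σ n) → ZMod 2))
    (an : (n q : Fin 2) → Msg L × Msg L → (Fin (lam n q) → ZMod 2))
    (hfac : ∀ n q w w', st n w = st n w' → an n q w = an n q w')
    (hdec : ∀ k q1 q2 w w', stdP k (q1, q2) ≠ 0 → an 0 q1 w = an 0 q1 w' →
      an 1 q2 w = an 1 q2 w' → target k w = target k w') :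
    ∃ C : Code L, IsZeroError C.base ∧ C.base.stor 0 = σ 0 ∧ C.base.stor 1 = σ 1 ∧
      betaRate C.base 0 = ((lam 0 0 : ℝ) + lam 0 1) / 2 ∧
      betaRate C.base 1 = ((lam 1 0 : ℝ) + lam 1 1) / 2 := by
  classical
  let base : CodeBase L (Fin 2) :=
    { P := stdP
      P_nonneg := by intro k qq; unfold stdP; split_ifs <;> norm_num
      P_sum := by
        intro k
        rw [Fintype.sum_prod_type]
        fin_cases k <;> simp [stdP, Fin.sum_univ_two] <;> norm_num
      stor := σ
      phi := st
      blen := lam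
      ans := fun n q s => if h : ∃ w, st n w = s then an n q h.choose else 0
      dec := fun k q1 q2 a b => if h : ∃ w, an 0 q1 w = a ∧ an 1 q2 w = b then
        target k h.choose else 0
      privacy := by
        intro n q s
        congr 1
        rw [Fintype.sum_prod_type, Fintype.sum_prod_type]
        fin_cases n <;> fin_cases q <;> simp [stdP, Fin.sum_univ_two] }
  have hans : ∀ n q w, base.ans n q (base.phi n w) = an n q w := by
    intro n q w
    have h : ∃ w', st n w' = st n w := ⟨w, rfl⟩
    show (if h : ∃ w', st n w' = st n w then an n q h.choose else 0) = _
    rw [dif_pos h]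
    exact hfac n q _ _ h.choose_spec
  refine ⟨{ Q := Fin 2, base := base }, ?_, rfl, rfl, ?_, ?_⟩
  · rintro k w ⟨q1, q2⟩ hP
    unfold retrieved
    simp only [hans]
    have h : ∃ w', an 0 q1 w' = an 0 q1 w ∧ an 1 q2 w' = an 1 q2 w := ⟨w, rfl, rfl⟩
    show (if h : ∃ w', an 0 q1 w' = an 0 q1 w ∧ an 1 q2 w' = an 1 q2 w then
        target k h.choose else 0) = _
    rw [dif_pos h]
    exact hdec k q1 q2 _ _ hP h.choose_spec.1 h.choose_spec.2
  · show ∑ qq : Fin 2 × Fin 2, stdP 0 qq * (lam 0 (if (0 : Fin 2) = 0 then qq.1 else qq.2) : ℝ) = _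
    rw [Fintype.sum_prod_type]
    simp [stdP, Fin.sum_univ_two]; ring
  · show ∑ qq : Fin 2 × Fin 2, stdP 0 qq * (lam 1 (if (1 : Fin 2) = 0 then qq.1 else qq.2) : ℝ) = _
    rw [Fintype.sum_prod_type]
    simp [stdP, Fin.sum_univ_two]; ring

/-- storage coordinates -/
def SS : Fin 2 → Finset (Fin 5) := fun n => if n = 0 then {0, 1, 2} else {3, 4}

/-- answer coordinates -/
def QQ : Fin 2 → Fin 2 → Finset (Fin 5) := fun n q =>
  if n = 0 then (if q = 0 then {0, 1} else {0, 2}) else (if q = 0 then {3} else {4})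

theorem mkCode2 (L κ : ℕ) (j : Msg L × Msg L → Fin (2 ^ κ))
    (b : Fin 5 → Msg L × Msg L → ℕ → ZMod 2) (s m : Fin 5 → ℕ)
    (hfac : ∀ n w w', j w = j w' → (∀ i ∈ SS n, ∀ k < s i, b i w k = b i w' k) →
      ∀ i ∈ SS n, ∀ k < m i, b i w k = b i w' k)
    (hdec : ∀ k q1 q2 w w', stdP k (q1, q2) ≠ 0 → j w = j w' →
      (∀ i ∈ QQ 0 q1 ∪ QQ 1 q2, ∀ k < m i, b i w k = b i w' k) → target k w = target k w') :
    ∃ C : Code L, IsZeroError C.base ∧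
      ((C.base.stor 0 + C.base.stor 1 : ℕ) : ℝ) = 2 * κ + s 0 + s 1 + s 2 + s 3 + s 4 ∧
      betaRate C.base 0 + betaRate C.base 1 = 2 * κ + m 0 + ((m 1 : ℝ) + m 2 + m 3 + m 4) / 2 := by
  have hst := fun n => bits_enc κ j b (SS n) s
  have han := fun n q => bits_enc κ j b (QQ n q) m
  choose st hst using hst
  choose an han using han
  have hsub : ∀ n q, QQ n q ⊆ SS n := by decide
  obtain ⟨C, h0, h1, h2, h3, h4⟩ := mkCode L _ _ st an
    (by
      intro n q w w' h
      rw [hst] at h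
      rw [han]
      exact ⟨h.1, fun i hi => hfac n w w' h.1 h.2 i (hsub n q hi)⟩)
    (by
      intro k q1 q2 w w' hP h1 h2
      rw [han] at h1 h2
      refine hdec k q1 q2 w w' hP h1.1 ?_
      intro i hi
      rcases Finset.mem_union.mp hi with h | h
      · exact h1.2 i h
      · exact h2.2 i h)
  refine ⟨C, h0, ?_, ?_⟩
  · rw [h1, h2]
    simp [SS]; ring
  · rw [h3, h4]
    simp [QQ]; ring

end assembly
section entropy
variable {Ω : Type} [Fintype Ω]

theorem prOf_nonneg {γ : Type} [DecidableEq γ] (p : Ω → ℝ) (hp : ∀ ω, 0 ≤ p ω) (X : Ω → γ) (x : γ) :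
    0 ≤ prOf p X x :=
  Finset.sum_nonneg fun u _ => by split_ifs; exacts [hp _, le_rfl]

theorem prOf_pos {γ : Type} [DecidableEq γ] (p : Ω → ℝ) (hp : ∀ ω, 0 ≤ p ω) (X : Ω → γ) (ω : Ω)
    (h : 0 < p ω) : 0 < prOf p X (X ω) := by
  refine lt_of_lt_of_le h ?_
  have := Finset.single_le_sum (f := fun u => if X u = X ω then p u else 0)
    (fun u _ => by split_ifs; exacts [hp _, le_rfl]) (Finset.mem_univ ω)
  simpa [prOf] using this

theorem sum_prOf {γ : Type} [Fintype γ] [DecidableEq γ] (p : Ω → ℝ) (X : Ω → γ) (F : γ → ℝ) :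
    ∑ x, prOf p X x * F x = ∑ ω, p ω * F (X ω) := by
  unfold prOf
  simp only [Finset.sum_mul]
  rw [Finset.sum_comm]
  apply Finset.sum_congr rfl
  intro ω _
  rw [Finset.sum_eq_single (X ω)]
  · simp
  · intro b _ hb; rw [if_neg (Ne.symm hb), zero_mul]
  · simp

theorem ent_eq {γ : Type} [Fintype γ] [DecidableEq γ] (p : Ω → ℝ) (X : Ω → γ) :
    ent p X = ∑ ω, p ω * -Real.logb 2 (prOf p X (X ω)) := by
  rw [← sum_prOf p X (fun x => -Real.logb 2 (prOf p X x))]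
  unfold ent
  apply Finset.sum_congr rfl
  intro x _; ring

theorem mg_prOf {I Γ : Type} [Fintype I] [DecidableEq I] [Fintype Γ] [DecidableEq Γ]
    (p : Ω → ℝ) (U : Ω → I → Γ) (B : Finset I) (y : I → Γ) :
    mg (prOf p U) B y = ∑ ω, if ∀ i ∈ B, U ω i = y i then p ω else 0 := by
  have := sum_prOf p U (fun u => if ∀ i ∈ B, u i = y i then 1 else 0)
  simpa [mg] using this

theorem HH_eq {I Γ δ : Type} [Fintype I] [DecidableEq I] [Fintype Γ] [DecidableEq Γ]
    [Fintype δ] [DecidableEq δ]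
    (p : Ω → ℝ) (U : Ω → I → Γ) (B : Finset I) (Y : Ω → δ)
    (h : ∀ ω ω', (∀ i ∈ B, U ω i = U ω' i) ↔ Y ω = Y ω') :
    HH (prOf p U) B = ent p Y := by
  unfold HH
  rw [sum_prOf p U (fun y => -Real.logb 2 (mg (prOf p U) B y)), ent_eq]
  apply Finset.sum_congr rfl
  intro ω _
  rw [mg_prOf]
  unfold prOf
  simp only [h]

theorem prOf_fst {α β : Type} [DecidableEq α] [Fintype β] [DecidableEq β] (p : Ω → ℝ)
    (X : Ω → α) (Y : Ω → β) (x : α) :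
    ∑ y, prOf p (fun ω => (X ω, Y ω)) (x, y) = prOf p X x := by
  unfold prOf
  rw [Finset.sum_comm]
  apply Finset.sum_congr rfl
  intro ω _
  simp only [Prod.mk.injEq]
  by_cases h : X ω = x <;> simp [h]

theorem prOf_snd {α β : Type} [DecidableEq α] [Fintype α] [DecidableEq β] (p : Ω → ℝ)
    (X : Ω → α) (Y : Ω → β) (y : β) :
    ∑ x, prOf p (fun ω => (X ω, Y ω)) (x, y) = prOf p Y y := by
  unfold prOf
  rw [Finset.sum_comm]
  apply Finset.sum_congr rfl
  intro ω _
  simp only [Prod.mk.injEq]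
  by_cases h : Y ω = y <;> simp [h]

theorem cmi_nonneg {α β γ : Type} [Fintype α] [DecidableEq α] [Fintype β] [DecidableEq β]
    [Fintype γ] [DecidableEq γ] (p : Ω → ℝ) (hp : ∀ ω, 0 ≤ p ω) (hs : ∑ ω, p ω = 1)
    (X : Ω → α) (Y : Ω → β) (Z : Ω → γ) : 0 ≤ cmi p X Y Z := by
  unfold cmi
  rw [ent_eq, ent_eq, ent_eq, ent_eq, ← Finset.sum_add_distrib, ← Finset.sum_sub_distrib,
    ← Finset.sum_sub_distrib]
  let a : Ω → ℝ := fun ω => prOf p (fun ω => (X ω, Z ω)) (X ω, Z ω)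
  let b : Ω → ℝ := fun ω => prOf p (fun ω => (Y ω, Z ω)) (Y ω, Z ω)
  let c : Ω → ℝ := fun ω => prOf p (fun ω => (X ω, Y ω, Z ω)) (X ω, Y ω, Z ω)
  let d : Ω → ℝ := fun ω => prOf p Z (Z ω)
  have hl2 : 0 < Real.log 2 := Real.log_pos (by norm_num)
  have hpt : ∀ ω, (p ω - p ω * (a ω * b ω / (c ω * d ω))) / Real.log 2 ≤
      p ω * -Real.logb 2 (a ω) + p ω * -Real.logb 2 (b ω) - p ω * -Real.logb 2 (c ω)
        - p ω * -Real.logb 2 (d ω) := by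
    intro ω
    rcases (hp ω).eq_or_lt with h0 | h0
    · simp [← h0]
    · have ha : 0 < a ω := prOf_pos p hp (fun ω => (X ω, Z ω)) ω h0
      have hb : 0 < b ω := prOf_pos p hp (fun ω => (Y ω, Z ω)) ω h0
      have hc : 0 < c ω := prOf_pos p hp (fun ω => (X ω, Y ω, Z ω)) ω h0
      have hd : 0 < d ω := prOf_pos p hp Z ω h0
      have hlog := Real.log_le_sub_one_of_pos (x := a ω * b ω / (c ω * d ω)) (by positivity)
      rw [Real.log_div (by positivity) (by positivity), Real.log_mul ha.ne' hb.ne',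
        Real.log_mul hc.ne' hd.ne'] at hlog
      have e : p ω * -Real.logb 2 (a ω) + p ω * -Real.logb 2 (b ω) - p ω * -Real.logb 2 (c ω)
        - p ω * -Real.logb 2 (d ω) = (p ω * (Real.log (c ω) + Real.log (d ω) - Real.log (a ω)
          - Real.log (b ω))) / Real.log 2 := by
        simp only [Real.logb]; ring
      rw [e]
      apply div_le_div_of_nonneg_right _ hl2.le
      nlinarith
  refine le_trans ?_ (Finset.sum_le_sum fun ω _ => hpt ω)
  rw [← Finset.sum_div, Finset.sum_sub_distrib, hs]
  apply div_nonneg _ hl2.le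
  rw [sub_nonneg]
  have e := sum_prOf p (fun ω => (X ω, Y ω, Z ω)) (fun s : α × β × γ =>
    prOf p (fun ω => (X ω, Z ω)) (s.1, s.2.2) * prOf p (fun ω => (Y ω, Z ω)) (s.2.1, s.2.2) /
      (prOf p (fun ω => (X ω, Y ω, Z ω)) s * prOf p Z s.2.2))
  have e' : ∑ ω, p ω * (a ω * b ω / (c ω * d ω)) = _ := e.symm
  rw [e']
  calc _ ≤ ∑ s : α × β × γ, prOf p (fun ω => (X ω, Z ω)) (s.1, s.2.2) *
        prOf p (fun ω => (Y ω, Z ω)) (s.2.1, s.2.2) / prOf p Z s.2.2 := by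
        apply Finset.sum_le_sum
        intro s _
        have n1 := prOf_nonneg p hp (fun ω => (X ω, Z ω)) (s.1, s.2.2)
        have n2 := prOf_nonneg p hp (fun ω => (Y ω, Z ω)) (s.2.1, s.2.2)
        have n3 := prOf_nonneg p hp (fun ω => (X ω, Y ω, Z ω)) s
        have n4 := prOf_nonneg p hp Z s.2.2
        rcases n3.eq_or_lt with h | h
        · rw [← h, zero_mul]; positivity
        · apply le_of_eq
          field_simp
    _ = ∑ x, ∑ y, ∑ z, prOf p (fun ω => (X ω, Z ω)) (x, z) *
        prOf p (fun ω => (Y ω, Z ω)) (y, z) / prOf p Z z := by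
        rw [Fintype.sum_prod_type]
        apply Finset.sum_congr rfl; intro x _
        rw [Fintype.sum_prod_type]
    _ = ∑ z, (∑ x, prOf p (fun ω => (X ω, Z ω)) (x, z)) *
        (∑ y, prOf p (fun ω => (Y ω, Z ω)) (y, z)) / prOf p Z z := by
        simp only [Finset.sum_mul_sum, Finset.sum_div]
        symm
        rw [Finset.sum_comm]
        apply Finset.sum_congr rfl; intro x _
        rw [Finset.sum_comm]
    _ = ∑ z, prOf p Z z := by
        apply Finset.sum_congr rfl; intro z _
        rw [prOf_snd, prOf_snd]
        by_cases h : prOf p Z z = 0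
        · simp [h]
        · field_simp
    _ ≤ 1 := by
        have := sum_prOf p Z (fun _ => 1)
        simp only [mul_one] at this
        rw [this, hs]

theorem HH_submod {I Γ : Type} [Fintype I] [DecidableEq I] [Fintype Γ] [DecidableEq Γ]
    (p : Ω → ℝ) (hp : ∀ ω, 0 ≤ p ω) (hs : ∑ ω, p ω = 1) (U : Ω → I → Γ) (A B C : Finset I) :
    HH (prOf p U) (A ∪ B ∪ C) + HH (prOf p U) C ≤ HH (prOf p U) (A ∪ C) + HH (prOf p U) (B ∪ C) := by
  let rs : (S : Finset I) → Ω → ({i // i ∈ S} → Γ) := fun S ω i => U ω i.1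
  have hrs : ∀ S ω ω', rs S ω = rs S ω' ↔ ∀ i ∈ S, U ω i = U ω' i := by
    intro S ω ω'
    constructor
    · intro h i hi; exact congrFun h ⟨i, hi⟩
    · intro h; funext i; exact h i.1 i.2
  have := cmi_nonneg p hp hs (rs A) (rs B) (rs C)
  unfold cmi at this
  rw [HH_eq p U (A ∪ B ∪ C) (fun ω => (rs A ω, rs B ω, rs C ω)), HH_eq p U C (rs C),
    HH_eq p U (A ∪ C) (fun ω => (rs A ω, rs C ω)), HH_eq p U (B ∪ C) (fun ω => (rs B ω, rs C ω))]
  · linarith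
  all_goals
    intro ω ω'
    simp only [Prod.mk.injEq, hrs, Finset.mem_union] <;> grind

theorem HH_empty {I Γ : Type} [Fintype I] [DecidableEq I] [Fintype Γ] [DecidableEq Γ]
    (q : (I → Γ) → ℝ) (hs : ∑ y, q y = 1) : HH q ∅ = 0 := by
  simp [HH, mg, hs]

end entropy
section core

/-- embed coordinate sets -/
def sm (S : Finset (Fin 5)) : Finset (Option (Fin 5)) := S.map Function.Embedding.some

/-- `H(X_i | V)` -/
noncomputable def cc {Γ : Type} [Fintype Γ] [DecidableEq Γ] (q : (Option (Fin 5) → Γ) → ℝ)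
    (i : Fin 5) : ℝ := HH q {none, some i} - HH q {none}

open Classical in
theorem core1 {Γ : Type} [Fintype Γ] [DecidableEq Γ] (q : (Option (Fin 5) → Γ) → ℝ)
    (hq : ∀ y, 0 ≤ q y) (hsum : ∑ y, q y = 1) (mb ab : Fin 5 → ℝ)
    (hA : ∀ J : Finset (Fin 5), HH q Finset.univ - HH q (Finset.univ \ sm J) ≤ ∑ i ∈ J, cc q i)
    (hb : ∀ q1 q2, ∀ J ⊆ QQ 0 q1 ∪ QQ 1 q2, HH q (sm (QQ 0 q1 ∪ QQ 1 q2)) -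
      HH q (sm (QQ 0 q1 ∪ QQ 1 q2) \ sm J) ≤ ∑ i ∈ J, (cc q i + mb i))
    (hs : ∀ n, (∀ i ∈ SS n, ab i = mb i) ∨ (∀ J ⊆ SS n, HH q (sm (SS n)) -
      HH q (sm (SS n) \ sm J) ≤ ∑ i ∈ J, (cc q i + ab i)))
    (δ : ℝ) (hδ : 0 < δ) :
    ∃ n0 : ℕ, ∀ n ≥ n0, ∀ (r m s : Fin 5 → ℕ), (∀ i, n * (cc q i + 3 * δ) ≤ r i) →
      (∀ i, n * mb i ≤ m i) → (∀ i, n * ab i ≤ s i) →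
      ∃ (h : Fin 5 → (Fin n → Γ) → ℕ → ZMod 2) (G : Finset (Option (Fin 5) → Fin n → Γ)),
        (∀ z ∈ G, ∀ j, 0 < q (fun i => z i j)) ∧
        (1/4 : ℝ) * (2:ℝ) ^ (n * (HH q Finset.univ - δ)) ≤ 2 ^ (∑ i, r i) * G.card ∧
        (∀ z ∈ G, ∀ z' ∈ G, ∀ i, ∀ k < r i, h i (z (some i)) k = h i (z' (some i)) k) ∧
        (∀ z ∈ G, ∀ z' ∈ G, z none = z' none → z = z') ∧
        (∀ q1 q2, ∀ z ∈ G, ∀ z' ∈ G,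
          (∀ i ∈ QQ 0 q1 ∪ QQ 1 q2, ∀ k < r i + m i, h i (z (some i)) k = h i (z' (some i)) k) →
          ∀ i ∈ QQ 0 q1 ∪ QQ 1 q2, z (some i) = z' (some i)) ∧
        (∀ n', (∀ i ∈ SS n', ab i = mb i) ∨ ∀ z ∈ G, ∀ z' ∈ G,
          (∀ i ∈ SS n', ∀ k < r i + s i, h i (z (some i)) k = h i (z' (some i)) k) →
          ∀ i ∈ SS n', z (some i) = z' (some i)) := by
  obtain ⟨n1, hn1⟩ := typical q hq hsum δ hδ
  obtain ⟨n2, hn2⟩ := exists_nat_gt (10 / δ)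
  refine ⟨max n1 n2, fun n hn r m s hr hm hss => ?_⟩
  obtain ⟨T, hT1, hT2, hT3, hT4⟩ := hn1 n (le_trans (le_max_left _ _) hn)
  have hnδ : 10 ≤ n * δ := by
    have h1 : (n2:ℝ) ≤ n := by exact_mod_cast le_trans (le_max_right _ _) hn
    rw [div_lt_iff₀ hδ] at hn2
    nlinarith
  let cond : Fin 2 → Prop := fun n => ∀ J ⊆ SS n, HH q (sm (SS n)) -
      HH q (sm (SS n) \ sm J) ≤ ∑ i ∈ J, (cc q i + ab i)
  let SSc : Fin 2 → Finset (Fin 5) := fun n => if cond n then SS n else ∅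
  let B : (Fin 2 × Fin 2) ⊕ Fin 2 ⊕ Unit → Finset (Option (Fin 5)) :=
    Sum.elim (fun qq => sm (QQ 0 qq.1 ∪ QQ 1 qq.2)) (Sum.elim (fun n => sm (SSc n)) (fun _ => Finset.univ))
  let K : (Fin 2 × Fin 2) ⊕ Fin 2 ⊕ Unit → Finset (Option (Fin 5)) :=
    Sum.elim (fun _ => ∅) (Sum.elim (fun _ => ∅) (fun _ => {none}))
  let l : (Fin 2 × Fin 2) ⊕ Fin 2 ⊕ Unit → Option (Fin 5) → ℕ :=
    Sum.elim (fun _ o => o.elim 0 (fun i => r i + m i))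
      (Sum.elim (fun _ o => o.elim 0 (fun i => r i + s i)) (fun _ o => o.elim 0 r))
  let lo : Finset (Option (Fin 5)) → ℝ := fun B => (2:ℝ) ^ (-(n * (HH q B + δ)))
  have key : ∀ (B : Finset (Option (Fin 5))) (J : Finset (Fin 5)) (l : Option (Fin 5) → ℕ)
      (e : Fin 5 → ℝ), J.Nonempty → (∀ i ∈ J, n * (e i + 3 * δ) ≤ l (some i)) →
      HH q B - HH q (B \ sm J) ≤ ∑ i ∈ J, e i → ∀ z ∈ T,
      mg (Pn q n) (B \ sm J) z ≤ (2:ℝ) ^ (-(n * δ)) * lo B * 2 ^ (∑ i ∈ sm J, l i) := by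
    intro B J l e hJ hl he z hz
    refine (hT3 z hz _).trans ?_
    rw [← Real.rpow_natCast, ← Real.rpow_add (by norm_num), ← Real.rpow_add (by norm_num)]
    apply Real.rpow_le_rpow_of_exponent_le (by norm_num)
    have h1 : ∑ i ∈ J, (n * (e i + 3 * δ)) ≤ ∑ i ∈ J, (l (some i) : ℝ) := Finset.sum_le_sum hl
    have h2 : ((∑ i ∈ sm J, l i : ℕ) : ℝ) = ∑ i ∈ J, (l (some i) : ℝ) := by
      rw [sm, Finset.sum_map]; push_cast; rfl
    rw [h2]
    rw [← Finset.mul_sum, Finset.sum_add_distrib, Finset.sum_const, nsmul_eq_mul] at h1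
    have h3 : (1:ℝ) ≤ J.card := by exact_mod_cast hJ.card_pos
    have h4 : n * (HH q B - HH q (B \ sm J)) ≤ n * ∑ i ∈ J, e i := by gcongr
    have h5 : n * δ * 3 * 1 ≤ n * δ * 3 * J.card := by gcongr
    nlinarith
  have hsm : ∀ S J, J ⊆ sm S → J.Nonempty → ∃ J' ⊆ S, J'.Nonempty ∧ J = sm J' := by
    intro S J hJ hne
    obtain ⟨J', h1, h2⟩ := Finset.subset_map_iff.mp hJ
    refine ⟨J', h1, ?_, h2⟩
    rw [h2] at hne
    exact Finset.map_nonempty.mp hne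
  obtain ⟨h, G, hGT, hGc, hGr, hGt⟩ := oneshot (ι := (Fin 2 × Fin 2) ⊕ Fin 2 ⊕ Unit) (Pn q n)
    (fun z => Finset.prod_nonneg fun _ _ => hq _) T B K l lo (fun _ => by positivity)
    ((2:ℝ) ^ (-(n * δ))) (by positivity) (fun B u hu => hT2 u hu B)
    (by
      rintro (τ | τ | τ)
      · exact Finset.empty_subset _
      · exact Finset.empty_subset _
      · exact Finset.subset_univ _)
    (by
      rintro (τ | τ | τ) z hz J hJ hne
      · simp only [K, B, Sum.elim_inl, Finset.sdiff_empty] at hJ ⊢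
        obtain ⟨J', h1, h2, rfl⟩ := hsm _ _ hJ hne
        refine key _ J' _ (fun i => cc q i + mb i) h2 ?_ (hb _ _ J' h1) z hz
        intro i _
        simp only [l, Sum.elim_inl, Option.elim]
        push_cast
        linarith [hr i, hm i]
      · simp only [K, B, Sum.elim_inl, Sum.elim_inr, Finset.sdiff_empty] at hJ ⊢
        obtain ⟨J', h1, h2, rfl⟩ := hsm _ _ hJ hne
        have hc : cond τ := by
          by_contra hcon
          simp only [SSc, if_neg hcon] at h1
          rw [Finset.subset_empty.mp h1] at h2
          exact Finset.not_nonempty_empty h2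
        simp only [SSc, if_pos hc] at h1 ⊢
        refine key _ J' _ (fun i => cc q i + ab i) h2 ?_ (hc J' h1) z hz
        intro i _
        simp only [l, Sum.elim_inl, Sum.elim_inr, Option.elim]
        push_cast
        linarith [hr i, hss i]
      · simp only [K, B, Sum.elim_inr] at hJ ⊢
        have : J ⊆ sm Finset.univ := by
          intro o ho
          have := hJ ho
          rcases o with _ | i
          · simp at this
          · simp [sm]
        obtain ⟨J', h1, h2, rfl⟩ := hsm _ _ this hne
        refine key _ J' _ (fun i => cc q i) h2 ?_ (hA J') z hz
        intro i _
        simp only [l, Sum.elim_inr, Option.elim]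
        exact hr i)
    (by
      have h1 : (2:ℝ) ^ (-(n * δ)) ≤ (2:ℝ) ^ (-(10:ℝ)) :=
        Real.rpow_le_rpow_of_exponent_le (by norm_num) (by linarith)
      have h2 : (2:ℝ) ^ (-(10:ℝ)) = 1 / 1024 := by
        rw [Real.rpow_neg (by norm_num)]; norm_num
      have h3 : Fintype.card ((Fin 2 × Fin 2) ⊕ Fin 2 ⊕ Unit) = 7 := by simp
      have h4 : Fintype.card (Option (Fin 5)) = 6 := by simp
      rw [h3, h4]
      norm_num at h1 h2 ⊢
      linarith)
    Finset.univ (fun o => o.elim 0 r)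
  refine ⟨fun i => h (some i), G, fun z hz => hT1 z (hGT hz), ?_, ?_, ?_, ?_, ?_⟩
  · have : ∑ o : Option (Fin 5), (o.elim 0 r : ℕ) = ∑ i, r i := by
      rw [Fintype.sum_option]; simp
    rw [this] at hGc
    linarith
  · intro z hz z' hz' i k hk
    exact hGr z hz z' hz' (some i) (Finset.mem_univ _) k hk
  · intro z hz z' hz' hn'
    funext o
    refine hGt (Sum.inr (Sum.inr ())) z' hz' z hz ?_ ?_ o (Finset.mem_univ _)
    · intro i hi
      rw [Finset.mem_singleton.mp hi]; exact hn'
    · rintro (_ | i) _ k hk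
      · exact absurd hk (Nat.not_lt_zero _)
      · exact hGr z hz z' hz' (some i) (Finset.mem_univ _) k hk
  · intro q1 q2 z hz z' hz' hcol i hi
    refine hGt (Sum.inl (q1, q2)) z' hz' z hz (by simp [K]) ?_ (some i) ?_
    · intro o ho k hk
      simp only [B, Sum.elim_inl, sm, Finset.mem_map] at ho
      obtain ⟨i', hi', rfl⟩ := ho
      exact hcol i' hi' k hk
    · exact Finset.mem_map_of_mem _ hi
  · intro n'
    rcases hs n' with hc | hc
    · exact Or.inl hc
    · right
      intro z hz z' hz' hcol i hi
      have e : SSc n' = SS n' := if_pos hc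
      refine hGt (Sum.inr (Sum.inl n')) z' hz' z hz (by simp [K]) ?_ (some i) ?_
      · intro o ho k hk
        simp only [B, Sum.elim_inl, Sum.elim_inr, sm, Finset.mem_map, e] at ho
        obtain ⟨i', hi', rfl⟩ := ho
        exact hcol i' hi' k hk
      · simp only [B, Sum.elim_inl, Sum.elim_inr, e]
        exact Finset.mem_map_of_mem _ hi

end core
section core2

/-- extract the message letter -/
def vof {t : ℕ} {γ : Type} : (Msg t × Msg t) ⊕ γ → Msg t × Msg t := Sum.elim id (fun _ => 0)

lemma target_sub {t : ℕ} (k : Fin 2) (a b : Msg t × Msg t) :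
    target k (a - b) = target k a - target k b := by
  unfold target; split <;> simp

lemma eventually_exp (t : ℕ) (δ : ℝ) (hδ : 0 < δ) :
    ∃ n0 : ℕ, ∀ n ≥ n0, (2 * t * n : ℝ) * Real.log 2 < (2:ℝ) ^ (2 * δ * n - 7) := by
  have hc : 1 < (2:ℝ) ^ (2 * δ) := Real.one_lt_rpow (by norm_num) (by positivity)
  have h := tendsto_pow_const_div_const_pow_of_one_lt 1 hc
  have h2 := h.const_mul (2 * t * Real.log 2 * 2 ^ (7:ℝ))
  rw [mul_zero] at h2
  have h3 := h2.eventually_lt_const (show (0:ℝ) < 1 by norm_num)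
  rw [Filter.eventually_atTop] at h3
  obtain ⟨n0, hn0⟩ := h3
  refine ⟨n0, fun n hn => ?_⟩
  have h4 := hn0 n hn
  rw [Real.rpow_sub (by norm_num), Real.rpow_mul (by norm_num), Real.rpow_natCast]
  have h5 : (0:ℝ) < (2 ^ (2 * δ)) ^ n := by positivity
  rw [lt_div_iff₀ (by positivity)]
  rw [pow_one, mul_div_assoc', div_lt_one h5] at h4
  linarith

open Classical in
theorem core2a {t : ℕ} {γ : Type} [Fintype γ] [DecidableEq γ]
    (q : (Option (Fin 5) → (Msg t × Msg t) ⊕ γ) → ℝ)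
    (hq : ∀ y, 0 ≤ q y) (hsum : ∑ y, q y = 1) (mb ab : Fin 5 → ℝ)
    (hA : ∀ J : Finset (Fin 5), HH q Finset.univ - HH q (Finset.univ \ sm J) ≤ ∑ i ∈ J, cc q i)
    (hb : ∀ q1 q2, ∀ J ⊆ QQ 0 q1 ∪ QQ 1 q2, HH q (sm (QQ 0 q1 ∪ QQ 1 q2)) -
      HH q (sm (QQ 0 q1 ∪ QQ 1 q2) \ sm J) ≤ ∑ i ∈ J, (cc q i + mb i))
    (hs : ∀ n, (∀ i ∈ SS n, ab i = mb i) ∨ (∀ J ⊆ SS n, HH q (sm (SS n)) -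
      HH q (sm (SS n) \ sm J) ≤ ∑ i ∈ J, (cc q i + ab i)))
    (hcc : ∀ i, 0 ≤ cc q i)
    (hU : HH q Finset.univ = 2 * t + ∑ i, cc q i)
    (hv : ∀ y, 0 < q y → ∃ v, y none = Sum.inl v)
    (hd : ∀ k q1 q2, stdP k (q1, q2) ≠ 0 → ∀ y y', 0 < q y → 0 < q y' →
      (∀ i ∈ QQ 0 q1 ∪ QQ 1 q2, y (some i) = y' (some i)) →
      target k (vof (y none)) = target k (vof (y' none)))
    (δ : ℝ) (hδ : 0 < δ) :
    ∃ n0 : ℕ, ∀ n ≥ n0, ∃ (j : (Fin n → Msg t × Msg t) → Fin (2 ^ ⌈18 * δ * n⌉₊))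
      (b : Fin 5 → (Fin n → Msg t × Msg t) → ℕ → ZMod 2),
      (∀ n' w w', j w = j w' → (∀ i ∈ SS n', ∀ k < ⌈n * ab i⌉₊, b i w k = b i w' k) →
        ∀ i ∈ SS n', ∀ k < ⌈n * mb i⌉₊, b i w k = b i w' k) ∧
      (∀ k q1 q2 w w', stdP k (q1, q2) ≠ 0 → j w = j w' →
        (∀ i ∈ QQ 0 q1 ∪ QQ 1 q2, ∀ k < ⌈n * mb i⌉₊, b i w k = b i w' k) →
        ∀ l, target k (w l) = target k (w' l)) := by
  obtain ⟨n1, hn1⟩ := core1 q hq hsum mb ab hA hb hs δ hδ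
  obtain ⟨n2, hn2⟩ := eventually_exp t δ hδ
  refine ⟨max n1 n2, fun n hn => ?_⟩
  set r : Fin 5 → ℕ := fun i => ⌈n * (cc q i + 3 * δ)⌉₊ with hr
  obtain ⟨h, G, hpos, hcard, hF, hinj, hdec, hsto⟩ := hn1 n (le_trans (le_max_left _ _) hn) r
    (fun i => ⌈n * mb i⌉₊) (fun i => ⌈n * ab i⌉₊) (fun i => Nat.le_ceil _) (fun i => Nat.le_ceil _)
    (fun i => Nat.le_ceil _)
  let e : (Option (Fin 5) → Fin n → (Msg t × Msg t) ⊕ γ) → (Fin n → Msg t × Msg t) :=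
    fun z l => vof (z none l)
  have heinj : Set.InjOn e G := by
    intro z hz z' hz' hzz
    apply hinj z hz z' hz'
    funext l
    obtain ⟨v, hv1⟩ := hv _ (hpos z hz l)
    obtain ⟨v', hv2⟩ := hv _ (hpos z' hz' l)
    have := congrFun hzz l
    simp only [e, vof] at this

    rw [hv1, hv2] at this ⊢
    simpa using this
  have hWc : (Fintype.card (Fin n → Msg t × Msg t) : ℝ) = (2:ℝ) ^ (2 * t * n : ℝ) := by
    have : (2 * t * n : ℝ) = ((2 * t * n : ℕ) : ℝ) := by push_cast; ring
    rw [this, Real.rpow_natCast]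
    simp only [Fintype.card_fun, Fintype.card_prod, Fintype.card_fin, ZMod.card]
    push_cast
    rw [← pow_add, ← pow_mul]; congr 1; ring
  have hcov := covering (G.image e) ((2:ℝ) ^ (-(16 * δ * n + 7))) (2 ^ ⌈18 * δ * n⌉₊) (by positivity)
    (by
      rw [Finset.card_image_of_injOn heinj, hWc]
      have hrs : ((∑ i, r i : ℕ) : ℝ) ≤ n * (∑ i, cc q i) + 15 * δ * n + 5 := by
        push_cast
        have : ∀ i ∈ Finset.univ, (r i : ℝ) ≤ n * (cc q i + 3 * δ) + 1 := fun i _ =>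
          (Nat.ceil_lt_add_one (by have := hcc i; positivity)).le
        refine (Finset.sum_le_sum this).trans ?_
        rw [Finset.sum_add_distrib, ← Finset.mul_sum, Finset.sum_add_distrib]
        simp; linarith
      have h2 : (0:ℝ) < 2 ^ (∑ i, r i) := by positivity
      have h3 : (1/4:ℝ) * (2:ℝ) ^ (n * (HH q Finset.univ - δ)) / 2 ^ (∑ i, r i) ≤ G.card := by
        rw [div_le_iff₀ h2]; linarith
      refine le_trans ?_ h3
      have h4 : (1/4:ℝ) = 2 ^ (-2:ℝ) := by
        rw [Real.rpow_neg (by norm_num)]; norm_num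
      rw [h4, ← Real.rpow_natCast, ← Real.rpow_add (by norm_num), ← Real.rpow_add (by norm_num),
        ← Real.rpow_sub (by norm_num)]
      apply Real.rpow_le_rpow_of_exponent_le (by norm_num)
      rw [hU]
      nlinarith)
    (by
      rw [hWc, Real.log_rpow (by norm_num)]
      refine (hn2 n (le_trans (le_max_right _ _) hn)).trans_le ?_
      push_cast
      rw [← Real.rpow_natCast, ← Real.rpow_add (by norm_num)]
      apply Real.rpow_le_rpow_of_exponent_le (by norm_num)
      have := Nat.le_ceil (18 * δ * n)
      linarith)
  obtain ⟨sh, hsh⟩ := hcov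
  choose j hj using hsh
  simp only [Finset.mem_image] at hj
  choose z hzG hz using hj
  have hz1 : ∀ w l, vof (z w none l) = w l - sh (j w) l := fun w l => congrFun (hz w) l
  refine ⟨j, fun i w k => h i (z w (some i)) (r i + k), ?_, ?_⟩
  · intro n' w w' hj hbits
    rcases hsto n' with h1 | h1
    · intro i hi k hk
      rw [← h1 i hi] at hk
      exact hbits i hi k hk
    · have := h1 _ (hzG w) _ (hzG w') (by
        intro i hi k hk
        by_cases hkr : k < r i
        · exact hF _ (hzG w) _ (hzG w') i k hkr
        · have := hbits i hi (k - r i) (by omega)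
          simpa [Nat.add_sub_cancel' (not_lt.mp hkr)] using this)
      intro i hi k hk
      simp only [this i hi]
  · intro k q1 q2 w w' hst hjj hbits l
    have := hdec q1 q2 _ (hzG w) _ (hzG w') (by
        intro i hi k hk
        by_cases hkr : k < r i
        · exact hF _ (hzG w) _ (hzG w') i k hkr
        · have := hbits i hi (k - r i) (by omega)
          simpa [Nat.add_sub_cancel' (not_lt.mp hkr)] using this)
    have h2 := hd k q1 q2 hst _ _ (hpos _ (hzG w) l) (hpos _ (hzG w') l)
      (fun i hi => congrFun (this i hi) l)

    rw [hz1, hz1, hjj, target_sub, target_sub] at h2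
    simpa using h2

/-- cut a message into `n` blocks of length `t` -/
def cut (L n t : ℕ) (w : Msg L) : Fin n → Msg t := fun l i =>
  if h : l.1 * t + i.1 < L then w ⟨l.1 * t + i.1, h⟩ else 0

lemma cut_inj (L n t : ℕ) (ht : 1 ≤ t) (hn : L ≤ n * t) (w w' : Msg L)
    (h : ∀ l, cut L n t w l = cut L n t w' l) : w = w' := by
  funext x
  have h1 : x.1 / t < n := by
    rw [Nat.div_lt_iff_lt_mul ht]; omega
  have h2 := congrFun (h ⟨x.1 / t, h1⟩) ⟨x.1 % t, Nat.mod_lt _ ht⟩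
  have h3 : x.1 / t * t + x.1 % t = x.1 := Nat.div_add_mod' _ _
  simp only [cut, h3, x.2, dite_true] at h2
  exact h2

lemma target_cut (L n t : ℕ) (k : Fin 2) (w : Msg L × Msg L) (l : Fin n) :
    target k (cut L n t w.1 l, cut L n t w.2 l) = cut L n t (target k w) l := by
  unfold target; split <;> rfl

theorem core2 {t : ℕ} (ht : 1 ≤ t) {γ : Type} [Fintype γ] [DecidableEq γ]
    (q : (Option (Fin 5) → (Msg t × Msg t) ⊕ γ) → ℝ)
    (hq : ∀ y, 0 ≤ q y) (hsum : ∑ y, q y = 1) (mb ab : Fin 5 → ℝ)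
    (hA : ∀ J : Finset (Fin 5), HH q Finset.univ - HH q (Finset.univ \ sm J) ≤ ∑ i ∈ J, cc q i)
    (hb : ∀ q1 q2, ∀ J ⊆ QQ 0 q1 ∪ QQ 1 q2, HH q (sm (QQ 0 q1 ∪ QQ 1 q2)) -
      HH q (sm (QQ 0 q1 ∪ QQ 1 q2) \ sm J) ≤ ∑ i ∈ J, (cc q i + mb i))
    (hs : ∀ n, (∀ i ∈ SS n, ab i = mb i) ∨ (∀ J ⊆ SS n, HH q (sm (SS n)) -
      HH q (sm (SS n) \ sm J) ≤ ∑ i ∈ J, (cc q i + ab i)))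
    (hcc : ∀ i, 0 ≤ cc q i)
    (hU : HH q Finset.univ = 2 * t + ∑ i, cc q i)
    (hv : ∀ y, 0 < q y → ∃ v, y none = Sum.inl v)
    (hd : ∀ k q1 q2, stdP k (q1, q2) ≠ 0 → ∀ y y', 0 < q y → 0 < q y' →
      (∀ i ∈ QQ 0 q1 ∪ QQ 1 q2, y (some i) = y' (some i)) →
      target k (vof (y none)) = target k (vof (y' none)))
    (hm0 : ∀ i, 0 ≤ mb i) (ha0 : ∀ i, 0 ≤ ab i) (pt : ℝ × ℝ)
    (h1 : 2 * t * pt.1 ≥ ab 0 + ab 1 + ab 2 + ab 3 + ab 4)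
    (h2 : 4 * t * pt.2 ≥ 2 * mb 0 + mb 1 + mb 2 + mb 3 + mb 4) : Achievable pt := by
  intro ε hε
  set δ := ε / 100 with hδ
  obtain ⟨n0, hn0⟩ := core2a q hq hsum mb ab hA hb hs hcc hU hv hd δ (by positivity)
  have htR : (1:ℝ) ≤ t := by exact_mod_cast ht
  have hp1 : 0 ≤ pt.1 := by
    have := ha0 0; have := ha0 1; have := ha0 2; have := ha0 3; have := ha0 4
    by_contra hh; push Not at hh
    nlinarith
  have hp2 : 0 ≤ pt.2 := by
    have := hm0 0; have := hm0 1; have := hm0 2; have := hm0 3; have := hm0 4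
    by_contra hh; push Not at hh
    nlinarith
  obtain ⟨L1, hL1⟩ := exists_nat_gt ((2 * t * pt.1 + 4 * t * pt.2 + 20 + ε) / ε * 10)
  refine ⟨max L1 (n0 * t), fun L hL => ?_⟩
  set n := L / t + 1 with hn
  have hnn : n ≥ n0 := by
    have : n0 ≤ L / t := by
      rw [Nat.le_div_iff_mul_le ht]; exact le_trans (le_max_right _ _) hL
    omega
  have hLn : L ≤ n * t := by
    have := Nat.div_add_mod L t
    have := Nat.mod_lt L ht
    rw [hn]; nlinarith
  have hnL : (n:ℝ) * t ≤ L + t := by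
    have := Nat.div_mul_le_self L t
    have h3 : n * t ≤ L + t := by rw [hn]; nlinarith
    exact_mod_cast h3
  obtain ⟨j, b, hf, hdec⟩ := hn0 n hnn
  let em : Msg L × Msg L → Fin n → Msg t × Msg t := fun w l => (cut L n t w.1 l, cut L n t w.2 l)
  obtain ⟨C, hC1, hC2, hC3⟩ := mkCode2 L ⌈18 * δ * n⌉₊ (fun w => j (em w)) (fun i w => b i (em w))
    (fun i => ⌈n * ab i⌉₊) (fun i => ⌈n * mb i⌉₊) (fun n' w w' => hf n' (em w) (em w'))
    (by
      intro k q1 q2 w w' hst hj hbits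
      apply cut_inj L n t ht hLn
      intro l
      rw [← target_cut, ← target_cut]
      exact hdec k q1 q2 (em w) (em w') hst hj hbits l)
  have hc : ∀ x : ℝ, 0 ≤ x → (⌈n * x⌉₊ : ℝ) ≤ n * x + 1 := fun x hx =>
    (Nat.ceil_lt_add_one (by positivity)).le
  have hκ : (⌈18 * δ * n⌉₊ : ℝ) ≤ 18 * δ * n + 1 := (Nat.ceil_lt_add_one (by positivity)).le
  have hLb : (2 * t * pt.1 + 4 * t * pt.2 + 20 + ε) * 10 ≤ L * ε := by
    have : (L1:ℝ) ≤ L := by exact_mod_cast le_trans (le_max_left _ _) hL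
    have h5 := hL1.trans_le this
    rw [div_mul_eq_mul_div, div_lt_iff₀ hε] at h5
    exact h5.le
  have hn1 : (n:ℝ) ≤ L + 1 := by
    have : n ≤ L + 1 := by have := Nat.div_le_self L t; omega
    exact_mod_cast this
  have hδn : 18 * δ * n ≤ 18 / 100 * (L * ε + ε) := by
    rw [hδ]; nlinarith
  refine ⟨C, hC1, ?_, ?_⟩
  · rw [hC2]
    have e1 : (n:ℝ) * (ab 0 + ab 1 + ab 2 + ab 3 + ab 4) ≤ n * (2 * t * pt.1) := by gcongr
    have e2 : (n:ℝ) * t * pt.1 ≤ (L + t) * pt.1 := by gcongr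
    have := hc _ (ha0 0); have := hc _ (ha0 1); have := hc _ (ha0 2); have := hc _ (ha0 3)
    have := hc _ (ha0 4)
    have : 0 ≤ t * pt.1 := by positivity
    have : 0 ≤ t * pt.2 := by positivity
    linarith
  · rw [hC3]
    have e1 : (n:ℝ) * (2 * mb 0 + mb 1 + mb 2 + mb 3 + mb 4) ≤ n * (4 * t * pt.2) := by gcongr
    have e2 : (n:ℝ) * t * pt.2 ≤ (L + t) * pt.2 := by gcongr
    have := hc _ (hm0 0); have := hc _ (hm0 1); have := hc _ (hm0 2); have := hc _ (hm0 3)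
    have := hc _ (hm0 4)
    have : 0 ≤ t * pt.1 := by positivity
    have : 0 ≤ t * pt.2 := by positivity
    linarith

end core2
section final
variable {t : ℕ}

/-- the joint vector `(V, X0, …, X4)` -/
def UU (S : RVSetup t) (ω : S.Ω) : Option (Fin 5) → (Msg t × Msg t) ⊕ S.γ
  | none => Sum.inl (S.V ω)
  | some i => Sum.inr (S.X i ω)

@[simp] lemma UU_none (S : RVSetup t) (ω : S.Ω) : UU S ω none = Sum.inl (S.V ω) := rfl
@[simp] lemma UU_some (S : RVSetup t) (ω : S.Ω) (i : Fin 5) :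
    UU S ω (some i) = Sum.inr (S.X i ω) := rfl

/-- entropies of subfamilies -/
noncomputable def HS (S : RVSetup t) (B : Finset (Option (Fin 5))) : ℝ := HH (prOf S.p (UU S)) B

lemma HS_submod (S : RVSetup t) (A B C : Finset (Option (Fin 5))) :
    HS S (A ∪ B ∪ C) + HS S C ≤ HS S (A ∪ C) + HS S (B ∪ C) :=
  HH_submod S.p S.p_nonneg S.p_sum (UU S) A B C

lemma q_sum (S : RVSetup t) : ∑ y, prOf S.p (UU S) y = 1 := by
  have := sum_prOf S.p (UU S) (fun _ => 1)
  simp only [mul_one] at this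
  rw [this, S.p_sum]

lemma HS_empty (S : RVSetup t) : HS S ∅ = 0 := HH_empty _ (q_sum S)

lemma HS_eq (S : RVSetup t) {δ : Type} [Fintype δ] [DecidableEq δ] (B : Finset (Option (Fin 5)))
    (Y : S.Ω → δ) (h : ∀ ω ω', (∀ i ∈ B, UU S ω i = UU S ω' i) ↔ Y ω = Y ω') :
    HS S B = ent S.p Y := HH_eq S.p (UU S) B Y h

lemma HS_V (S : RVSetup t) : HS S {none} = ent S.p S.V := HS_eq S _ _ (by simp)
lemma HS_X (S : RVSetup t) (i : Fin 5) : HS S {some i} = ent S.p (S.X i) := HS_eq S _ _ (by simp)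
lemma HS_VX (S : RVSetup t) (i : Fin 5) :
    HS S {none, some i} = ent S.p (fun ω => (S.V ω, S.X i ω)) := HS_eq S _ _ (by simp)

/-- `H(X_i | V)` -/
noncomputable def cs (S : RVSetup t) (i : Fin 5) : ℝ := cc (prOf S.p (UU S)) i

lemma cs_eq (S : RVSetup t) (i : Fin 5) : cs S i = HS S {none, some i} - HS S {none} := rfl

lemma HS_step (S : RVSetup t) (i : Fin 5) (B : Finset (Option (Fin 5))) (hB : none ∈ B) :
    HS S (insert (some i) B) ≤ HS S B + cs S i := by
  have h := HS_submod S {some i} B {none}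
  have h1 : ({some i} ∪ B ∪ {none} : Finset (Option (Fin 5))) = insert (some i) B := by
    ext x; simp; grind
  have h2 : (B ∪ {none} : Finset (Option (Fin 5))) = B := by
    ext x; simp; grind
  have h3 : ({some i} ∪ {none} : Finset (Option (Fin 5))) = {none, some i} := by
    ext x; simp; grind
  rw [h1, h2, h3] at h
  rw [cs_eq]; linarith

lemma HS_hA (S : RVSetup t) (J : Finset (Fin 5)) :
    HS S Finset.univ - HS S (Finset.univ \ sm J) ≤ ∑ i ∈ J, cs S i := by
  induction J using Finset.induction_on with
  | empty => simp [sm]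
  | insert a J ha ih =>
    rw [Finset.sum_insert ha]
    have h := HS_step S a (Finset.univ \ sm (insert a J)) (by simp [sm])
    have h1 : insert (some a) (Finset.univ \ sm (insert a J)) = Finset.univ \ sm J := by
      ext x
      cases x with
      | none => simp [sm]
      | some x => simp [sm]; grind
    rw [h1] at h
    linarith

lemma cs_nonneg (S : RVSetup t) (i : Fin 5) : 0 ≤ cs S i := by
  have h := HS_submod S {some i} {some i} {none}
  have h3 : ({some i} ∪ {none} : Finset (Option (Fin 5))) = {none, some i} := by
    ext x; simp; grind
  rw [Finset.union_self, h3] at h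
  rw [cs_eq]; linarith

lemma mi_eq (S : RVSetup t) (i : Fin 5) : cs S i + mi S.p S.V (S.X i) = HS S {some i} := by
  rw [cs_eq, mi, ← HS_V, ← HS_X, ← HS_VX]; ring

lemma mi_nonneg (S : RVSetup t) (i : Fin 5) : 0 ≤ mi S.p S.V (S.X i) := by
  have h := HS_submod S {none} {some i} ∅
  rw [HS_empty] at h
  have h3 : ({none} ∪ {some i} ∪ ∅ : Finset (Option (Fin 5))) = {none, some i} := by
    ext x; simp
  rw [h3] at h
  simp only [Finset.union_empty] at h
  have := mi_eq S i
  rw [cs_eq] at this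
  linarith

lemma cmi_ok (S : RVSetup t) (l : Fin 5) (P : Finset (Option (Fin 5))) {δ : Type} [Fintype δ]
    [DecidableEq δ]
    (Y : S.Ω → δ) (h : ∀ ω ω', (∀ i ∈ P, UU S ω i = UU S ω' i) ↔ Y ω = Y ω') :
    HS S (insert (some l) P) - HS S P ≤ cs S l + cmi S.p S.V (S.X l) Y := by
  have h1 : HS S P = ent S.p Y := HS_eq S _ _ h
  have h2 : HS S (insert (some l) P) = ent S.p (fun ω => (S.X l ω, Y ω)) := HS_eq S _ _ (by
    intro ω ω'; rw [Finset.forall_mem_insert, h]; simp)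
  have h3 : HS S (insert none P) = ent S.p (fun ω => (S.V ω, Y ω)) := HS_eq S _ _ (by
    intro ω ω'; rw [Finset.forall_mem_insert, h]; simp)
  have h4 : HS S (insert (some l) (insert none P)) = ent S.p (fun ω => (S.V ω, S.X l ω, Y ω)) :=
    HS_eq S _ _ (by
      intro ω ω'; rw [Finset.forall_mem_insert, Finset.forall_mem_insert, h]; simp; tauto)
  have h5 := HS_step S l (insert none P) (by simp)
  rw [cmi, ← h1, ← h2, ← h3, ← h4]
  linarith

lemma triple_s8 (S : RVSetup t) (i j k : Fin 5) (hij : i ≠ j) (hik : i ≠ k) (hjk : j ≠ k)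
    (x : Fin 5 → ℝ) (h0 : HS S {some i} ≤ x i) (h1 : HS S {some j, some i} - HS S {some i} ≤ x j)
    (h2 : HS S {some k, some i, some j} - HS S {some i, some j} ≤ x k)
    (T : Finset (Fin 5)) (hT : T = {i, j, k}) (J : Finset (Fin 5)) (hJ : J ⊆ T) :
    HS S (sm T) - HS S (sm T \ sm J) ≤ ∑ i ∈ J, x i := by
  have step : ∀ l ∈ T, ∀ P : Finset (Option (Fin 5)), HS S (insert (some l) P) - HS S P ≤ x l →
      HS S ((sm T \ sm J) ∪ insert (some l) P) ≤ HS S ((sm T \ sm J) ∪ P) +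
        if l ∈ J then x l else 0 := by
    intro l hl P hx
    split_ifs with hlJ
    · have h := HS_submod S {some l} (sm T \ sm J) P
      have e1 : {some l} ∪ (sm T \ sm J) ∪ P = (sm T \ sm J) ∪ insert (some l) P := by
        ext x; simp only [Finset.mem_union, Finset.mem_insert, Finset.mem_singleton]; tauto
      have e2 : {some l} ∪ P = insert (some l) P := rfl
      rw [e1, e2] at h
      linarith
    · have e1 : (sm T \ sm J) ∪ insert (some l) P = (sm T \ sm J) ∪ P := by
        have : some l ∈ sm T \ sm J := by simp [sm, hl, hlJ]
        ext x; simp only [Finset.mem_union, Finset.mem_insert]; grind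
      rw [e1]; simp
  have s0 := step i (by simp [hT]) ∅ (by
    rw [HS_empty]; simpa using h0)
  have s1 := step j (by simp [hT]) {some i} h1
  have s2 := step k (by simp [hT]) {some i, some j} h2
  have e1 : (sm T \ sm J) ∪ {some k, some i, some j} = sm T := by
    subst hT
    ext x; cases x with
    | none => simp [sm]
    | some x => simp [sm]; tauto
  have e2 : ({some j, some i} : Finset (Option (Fin 5))) = {some i, some j} := Finset.pair_comm _ _
  rw [e1] at s2
  rw [e2] at s1
  have e3 : ∑ l ∈ J, x l = (if i ∈ J then x i else 0) + (if j ∈ J then x j else 0) +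
      (if k ∈ J then x k else 0) := by
    have : ∑ l ∈ J, x l = ∑ l ∈ T, if l ∈ J then x l else 0 := by
      rw [Finset.sum_ite_mem, Finset.inter_eq_right.mpr hJ]
    rw [this, hT, Finset.sum_insert (by simp [hij, hik]), Finset.sum_insert (by simp [hjk]),
      Finset.sum_singleton]
    ring
  rw [e3]
  simp only [insert_empty_eq, Finset.union_empty] at s0
  linarith

lemma sto_ok (S : RVSetup t) {M : ℕ} (e : Fin M ↪ Fin 5) (Z : Fin M → S.Ω → S.γ)
    (hZ : ∀ i, Z i = S.X (e i)) (R R' : Fin M → ℝ) (hR' : ∀ i, R' i = mi S.p S.V (S.X (e i)))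
    (ab : Fin 5 → ℝ) (hab : ∀ i, ab (e i) = R i)
    (h : RstarMD S.p S.V Z {(Finset.univ : Finset (Fin M))} R R')
    (T : Finset (Fin 5)) (hT : T = Finset.univ.map e) (J : Finset (Fin 5)) (hJ : J ⊆ T) :
    HS S (sm T) - HS S (sm T \ sm J) ≤ ∑ i ∈ J, (cs S i + ab i) := by
  subst hT
  obtain ⟨J', -, rfl⟩ := Finset.subset_map_iff.mp hJ
  have h3 := h.2.2 _ (Finset.mem_singleton_self _) J' (Finset.subset_univ _)
  have hj : ∀ A : Finset (Fin M), jEnt S.p Z A = HS S (sm (A.map e)) := by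
    intro A
    symm
    apply HS_eq
    intro ω ω'
    rw [funext_iff]
    simp [sm, hZ]
  rw [cjEnt, hj, hj] at h3
  have e1 : J' ∪ (Finset.univ \ J') = Finset.univ := by simp
  have e2 : sm ((Finset.univ \ J').map e) = sm (Finset.univ.map e) \ sm (J'.map e) := by
    simp only [sm]
    ext x; cases x <;> simp
    grind
  rw [e1, e2] at h3
  rw [Finset.sum_map]
  have e4 : ∑ j ∈ J', (cs S (e j) + ab (e j)) =
      ∑ j ∈ J', ent S.p (Z j) - ∑ j ∈ J', (R' j - R j) := by
    rw [← Finset.sum_sub_distrib]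
    apply Finset.sum_congr rfl
    intro j _
    have := mi_eq S (e j)
    rw [HS_X] at this
    rw [hab, hR', hZ]; linarith
  rw [e4]; linarith

lemma HS_none (S : RVSetup t) : HS S {none} = 2 * t := by
  rw [HS_V, ent_eq]
  simp only [S.V_unif]
  rw [← Finset.sum_mul, S.p_sum, Real.logb_inv, Real.logb_pow, Real.logb_self_eq_one (by norm_num)]
  push_cast; ring

lemma HS_univ (S : RVSetup t)
    (hf : ∀ (v : Msg t × Msg t) (x0 x1 x2 y1 y2 : S.γ),
      prOf S.p (fun ω => (S.V ω, S.X 0 ω, S.X 1 ω, S.X 2 ω, S.X 3 ω, S.X 4 ω))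
          (v, x0, x1, x2, y1, y2) * (prOf S.p S.V v) ^ 4 =
        prOf S.p (fun ω => (S.V ω, S.X 0 ω)) (v, x0) *
        prOf S.p (fun ω => (S.V ω, S.X 1 ω)) (v, x1) *
        prOf S.p (fun ω => (S.V ω, S.X 2 ω)) (v, x2) *
        prOf S.p (fun ω => (S.V ω, S.X 3 ω)) (v, y1) *
        prOf S.p (fun ω => (S.V ω, S.X 4 ω)) (v, y2)) :
    HS S Finset.univ = 2 * t + ∑ i, cs S i := by
  have h1 : HS S Finset.univ =
      ent S.p (fun ω => (S.V ω, S.X 0 ω, S.X 1 ω, S.X 2 ω, S.X 3 ω, S.X 4 ω)) := by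
    apply HS_eq
    intro ω ω'
    simp only [Finset.mem_univ, forall_true_left, Option.forall, UU_none, UU_some, Prod.mk.injEq,
      Sum.inl.injEq, Sum.inr.injEq, Fin.forall_fin_succ]
    simp
  have key : HS S Finset.univ + 4 * HS S {none} = HS S {none, some 0} + HS S {none, some 1} +
      HS S {none, some 2} + HS S {none, some 3} + HS S {none, some 4} := by
    rw [h1, HS_V]
    simp only [HS_VX, ent_eq]
    rw [Finset.mul_sum]
    simp only [← Finset.sum_add_distrib]
    apply Finset.sum_congr rfl
    intro ω _
    rcases (S.p_nonneg ω).eq_or_lt with h0 | h0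
    · rw [← h0]; ring
    · have hh := congrArg (Real.logb 2) (hf (S.V ω) (S.X 0 ω) (S.X 1 ω) (S.X 2 ω) (S.X 3 ω) (S.X 4 ω))
      have a := (prOf_pos S.p S.p_nonneg
        (fun ω => (S.V ω, S.X 0 ω, S.X 1 ω, S.X 2 ω, S.X 3 ω, S.X 4 ω)) ω h0).ne'
      have b := (prOf_pos S.p S.p_nonneg S.V ω h0).ne'
      have c : ∀ i, prOf S.p (fun ω => (S.V ω, S.X i ω)) (S.V ω, S.X i ω) ≠ 0 := fun i =>
        (prOf_pos S.p S.p_nonneg (fun ω => (S.V ω, S.X i ω)) ω h0).ne'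
      have c0 := c 0
      have c1 := c 1
      have c2 := c 2
      have c3 := c 3
      have c4 := c 4
      rw [Real.logb_mul a (pow_ne_zero _ b), Real.logb_pow, Real.logb_mul (by positivity) c4,
        Real.logb_mul (by positivity) c3, Real.logb_mul (by positivity) c2,
        Real.logb_mul c0 c1] at hh
      push_cast at hh
      linear_combination (-S.p ω) * hh
  have := HS_none S
  simp only [Fin.sum_univ_five, cs_eq]
  linarith

lemma q_pos (S : RVSetup t) (y) (hy : 0 < prOf S.p (UU S) y) : ∃ ω, S.p ω ≠ 0 ∧ UU S ω = y := by
  by_contra hh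
  push Not at hh
  have : prOf S.p (UU S) y = 0 := by
    apply Finset.sum_eq_zero
    intro ω _
    split_ifs with h
    · by_contra h0; exact hh ω h0 h
    · rfl
  linarith

end final
/-- For every integer `t ≥ 1`, the region `R̃^{(t)}_in` is contained in the
achievable storage-retrieval rate region `R` of the (2,2) PIR problem. -/
theorem statement8 (t : ℕ) (ht : 1 ≤ t) : {ab : ℝ × ℝ | RtildeMem t ab} ⊆ Region := by
  rintro pt ⟨S, hf, ⟨f11, f12, f21, f22, hfd⟩, a1, a2, a3, a4, hs1, hs2, hs3, hs4, hr1, hr2⟩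
  set g0 := mi S.p S.V (S.X 0) with hg0
  set b1 := cmi S.p S.V (S.X 1) (S.X 0) with hb1
  set b2 := cmi S.p S.V (S.X 2) (S.X 0) with hb2
  set b3 := max (cmi S.p S.V (S.X 3) (fun ω => (S.X 0 ω, S.X 1 ω)))
                   (cmi S.p S.V (S.X 3) (fun ω => (S.X 0 ω, S.X 2 ω))) with hb3
  set b4 := max (cmi S.p S.V (S.X 4) (fun ω => (S.X 0 ω, S.X 1 ω)))
                   (cmi S.p S.V (S.X 4) (fun ω => (S.X 0 ω, S.X 2 ω))) with hb4
  have hg0n : 0 ≤ g0 := mi_nonneg S 0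
  have hb1n : 0 ≤ b1 := cmi_nonneg S.p S.p_nonneg S.p_sum _ _ _
  have hb2n : 0 ≤ b2 := cmi_nonneg S.p S.p_nonneg S.p_sum _ _ _
  have hb3n : 0 ≤ b3 := le_max_of_le_left (cmi_nonneg S.p S.p_nonneg S.p_sum _ _ _)
  have hb4n : 0 ≤ b4 := le_max_of_le_left (cmi_nonneg S.p S.p_nonneg S.p_sum _ _ _)
  let mb : Fin 5 → ℝ := ![g0, b1, b2, b3, b4]
  let ab : Fin 5 → ℝ := ![g0, a1, a2, a3, a4]
  have hx0 : HS S {some 0} ≤ cs S 0 + mb 0 := (mi_eq S 0).ge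
  have hx1 : HS S {some 1, some 0} - HS S {some 0} ≤ cs S 1 + mb 1 :=
    cmi_ok S 1 {some 0} (S.X 0) (by simp)
  have hx2 : HS S {some 2, some 0} - HS S {some 0} ≤ cs S 2 + mb 2 :=
    cmi_ok S 2 {some 0} (S.X 0) (by simp)
  have hx3a : HS S {some 3, some 0, some 1} - HS S {some 0, some 1} ≤ cs S 3 + mb 3 :=
    (cmi_ok S 3 {some 0, some 1} (fun ω => (S.X 0 ω, S.X 1 ω)) (by simp)).trans
      (by simp only [add_le_add_iff_left]; exact le_max_left _ _)
  have hx3b : HS S {some 3, some 0, some 2} - HS S {some 0, some 2} ≤ cs S 3 + mb 3 :=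
    (cmi_ok S 3 {some 0, some 2} (fun ω => (S.X 0 ω, S.X 2 ω)) (by simp)).trans
      (by simp only [add_le_add_iff_left]; exact le_max_right _ _)
  have hx4a : HS S {some 4, some 0, some 1} - HS S {some 0, some 1} ≤ cs S 4 + mb 4 :=
    (cmi_ok S 4 {some 0, some 1} (fun ω => (S.X 0 ω, S.X 1 ω)) (by simp)).trans
      (by simp only [add_le_add_iff_left]; exact le_max_left _ _)
  have hx4b : HS S {some 4, some 0, some 2} - HS S {some 0, some 2} ≤ cs S 4 + mb 4 :=
    (cmi_ok S 4 {some 0, some 2} (fun ω => (S.X 0 ω, S.X 2 ω)) (by simp)).trans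
      (by simp only [add_le_add_iff_left]; exact le_max_right _ _)
  -- database 1 storage
  have hst0 : (0 ≤ a1 ∧ 0 ≤ a2) ∧ ((∀ i ∈ SS 0, ab i = mb i) ∨ (∀ J ⊆ SS 0, HS S (sm (SS 0)) -
      HS S (sm (SS 0) \ sm J) ≤ ∑ i ∈ J, (cs S i + ab i))) := by
    by_cases hc : (g0 - g0) + (mi S.p S.V (S.X 1) - b1) + (mi S.p S.V (S.X 2) - b2) <
        ent S.p (S.X 0) + ent S.p (S.X 1) + ent S.p (S.X 2) - jEnt S.p S.X {0,1,2}
    · have h := hs1 hc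
      refine ⟨⟨(h.1 1).1, (h.1 2).1⟩, Or.inr ?_⟩
      exact sto_ok S (M := 3) ⟨![0, 1, 2], by decide⟩ _ (by intro i; fin_cases i <;> rfl) _ _
        (by intro i; fin_cases i <;> rfl) ab (by intro i; fin_cases i <;> rfl) h (SS 0) (by decide)
    · obtain ⟨e1, e2⟩ := hs2 hc
      refine ⟨⟨e1 ▸ hb1n, e2 ▸ hb2n⟩, Or.inl ?_⟩
      intro i hi
      simp only [SS, if_true, Finset.mem_insert, Finset.mem_singleton] at hi
      rcases hi with rfl | rfl | rfl
      · rfl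
      · exact e1
      · exact e2
  have hst1 : (0 ≤ a3 ∧ 0 ≤ a4) ∧ ((∀ i ∈ SS 1, ab i = mb i) ∨ (∀ J ⊆ SS 1, HS S (sm (SS 1)) -
      HS S (sm (SS 1) \ sm J) ≤ ∑ i ∈ J, (cs S i + ab i))) := by
    by_cases hc : (mi S.p S.V (S.X 3) - b3) + (mi S.p S.V (S.X 4) - b4) <
        mi S.p (S.X 3) (S.X 4)
    · have h := hs3 hc
      refine ⟨⟨(h.1 0).1, (h.1 1).1⟩, Or.inr ?_⟩
      exact sto_ok S (M := 2) ⟨![3, 4], by decide⟩ _ (by intro i; fin_cases i <;> rfl) _ _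
        (by intro i; fin_cases i <;> rfl) ab (by intro i; fin_cases i <;> rfl) h (SS 1) (by decide)
    · obtain ⟨e1, e2⟩ := hs4 hc
      refine ⟨⟨e1 ▸ hb3n, e2 ▸ hb4n⟩, Or.inl ?_⟩
      intro i hi
      simp only [SS, one_ne_zero, if_false, Finset.mem_insert, Finset.mem_singleton] at hi
      rcases hi with rfl | rfl
      · exact e1
      · exact e2
  have hbb : ∀ q1 q2, ∀ J ⊆ QQ 0 q1 ∪ QQ 1 q2, HS S (sm (QQ 0 q1 ∪ QQ 1 q2)) -
      HS S (sm (QQ 0 q1 ∪ QQ 1 q2) \ sm J) ≤ ∑ i ∈ J, (cs S i + mb i) := by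
    intro q1 q2 J hJ
    fin_cases q1 <;> fin_cases q2
    · exact triple_s8 S 0 1 3 (by decide) (by decide) (by decide) (fun i => cs S i + mb i)
        hx0 hx1 hx3a _ (by decide) J hJ
    · exact triple_s8 S 0 1 4 (by decide) (by decide) (by decide) (fun i => cs S i + mb i)
        hx0 hx1 hx4a _ (by decide) J hJ
    · exact triple_s8 S 0 2 3 (by decide) (by decide) (by decide) (fun i => cs S i + mb i)
        hx0 hx2 hx3b _ (by decide) J hJ
    · exact triple_s8 S 0 2 4 (by decide) (by decide) (by decide) (fun i => cs S i + mb i)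
        hx0 hx2 hx4b _ (by decide) J hJ
  refine core2 ht (prOf S.p (UU S)) (prOf_nonneg S.p S.p_nonneg _) (q_sum S) mb ab
    (HS_hA S) hbb ?_ (cs_nonneg S) (HS_univ S hf) ?_ ?_ ?_ ?_ pt hr1 hr2
  · intro n
    fin_cases n
    · exact hst0.2
    · exact hst1.2
  · intro y hy
    obtain ⟨ω, -, rfl⟩ := q_pos S y hy
    exact ⟨_, rfl⟩
  · intro k q1 q2 hk y y' hy hy' hyy
    obtain ⟨ω, hω, rfl⟩ := q_pos S y hy
    obtain ⟨ω', hω', rfl⟩ := q_pos S y' hy'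
    obtain ⟨d1, d2, d3, d4⟩ := hfd ω hω
    obtain ⟨d1', d2', d3', d4'⟩ := hfd ω' hω'
    simp only [UU_some, Sum.inr.injEq, UU_none, vof, Sum.elim_inl, id] at hyy ⊢
    fin_cases k <;> fin_cases q1 <;> fin_cases q2 <;> simp [stdP] at hk <;>
      simp [QQ] at hyy <;> simp [target]
    · rw [d1, d1', hyy.1, hyy.2.1, hyy.2.2]
    · rw [d2, d2', hyy.1, hyy.2.1, hyy.2.2]
    · rw [d3, d3', hyy.1, hyy.2.1, hyy.2.2]
    · rw [d4, d4', hyy.1, hyy.2.1, hyy.2.2]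
  · intro i; fin_cases i <;> assumption
  · intro i; fin_cases i
    · exact hg0n
    · exact hst0.1.1
    · exact hst0.1.2
    · exact hst1.1.1
    · exact hst1.1.2

end PIR
end
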